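/- arXiv:2510.16912 — 8 statements merged into one kernel-verified Lean document; each statement's English description precedes it below -/
import Mathlib

section
/- Let K be an algebraically closed field, d ≥ 2 an integer with char(K) not dividing d, and m > n ≥ 1 integers. Let a ∈ K, let A ∈ K be nonzero, and let v ∈ K[x] be a polynomial such that h(x) = A·(x−a)^m + v(x)^d has degree n. Then d divides m; setting ℓ = m/d, the polynomial v has degree ℓ and its leading coefficient B satisfies B^d = −A; moreover n − m + ℓ ≥ 0 and the polynomial q(x) := v(x) − B·(x−a)^ℓ is nonzero of degree exactly n − m + ℓ. -/
open Polynomial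

/-!
Since `deg h < m`, the top terms of `A (x - a) ^ m` and `v ^ d` cancel, so `d * deg v = m` and
`B ^ d = -A`. Hence `w := B (x - a) ^ (m / d)` satisfies `w ^ d = -A (x - a) ^ m`, and
`h = v ^ d - w ^ d = (∑ v ^ i w ^ (d - 1 - i)) (v - w)`. All the summands have the same degree and
the same leading coefficient `B ^ (d - 1)`; as `d ≠ 0` in the coefficient ring, their top
coefficients add up to `d B ^ (d - 1) ≠ 0`. So the first factor has degree exactly
`(d - 1) * deg v = m - m / d`, and the second has degree `n - m + m / d`.
-/

section Semiring

variable {R : Type*} [Semiring R] {p q : R[X]} {l : ℕ}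

theorem natDegree_geom_sum₂_le (hp : p.natDegree ≤ l) (hq : q.natDegree ≤ l) (k : ℕ) :
    (∑ i ∈ Finset.range k, p ^ i * q ^ (k - 1 - i)).natDegree ≤ (k - 1) * l := by
  refine natDegree_sum_le_of_forall_le _ _ fun i hi ↦ ?_
  have hik : i + (k - 1 - i) = k - 1 := by have := Finset.mem_range.mp hi; omega
  exact (natDegree_mul_le_of_le (natDegree_pow_le_of_le i hp)
    (natDegree_pow_le_of_le _ hq)).trans_eq (by rw [← add_mul, hik])

theorem coeff_geom_sum₂_of_natDegree_le (hp : p.natDegree ≤ l) (hq : q.natDegree ≤ l) (k : ℕ) :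
    (∑ i ∈ Finset.range k, p ^ i * q ^ (k - 1 - i)).coeff ((k - 1) * l) =
      ∑ i ∈ Finset.range k, p.coeff l ^ i * q.coeff l ^ (k - 1 - i) := by
  rw [finsetSum_coeff]
  refine Finset.sum_congr rfl fun i hi ↦ ?_
  have hik : i + (k - 1 - i) = k - 1 := by have := Finset.mem_range.mp hi; omega
  rw [← coeff_pow_of_natDegree_le hp, ← coeff_pow_of_natDegree_le hq,
    ← coeff_mul_add_eq_of_natDegree_le (natDegree_pow_le_of_le i hp) (natDegree_pow_le_of_le _ hq),
    ← add_mul, hik]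

theorem natDegree_geom_sum₂_of_leadingCoeff_eq {k : ℕ} (hdeg : p.natDegree = q.natDegree)
    (hlead : p.leadingCoeff = q.leadingCoeff) (hk : (k : R) * p.leadingCoeff ^ (k - 1) ≠ 0) :
    (∑ i ∈ Finset.range k, p ^ i * q ^ (k - 1 - i)).natDegree = (k - 1) * p.natDegree := by
  refine le_antisymm (natDegree_geom_sum₂_le le_rfl hdeg.ge k) (le_natDegree_of_ne_zero ?_)
  have hq : q.coeff p.natDegree = p.leadingCoeff := by rw [hdeg, coeff_natDegree, hlead]
  rwa [coeff_geom_sum₂_of_natDegree_le le_rfl hdeg.ge, hq, coeff_natDegree, geom_sum₂_self]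

theorem natDegree_eq_mul_of_natDegree_add_pow_lt [NoZeroDivisors R] {d : ℕ}
    (h : (p + q ^ d).natDegree < p.natDegree) : p.natDegree = d * q.natDegree := by
  rw [natDegree_eq_of_natDegree_add_lt_left _ _ h, natDegree_pow]

end Semiring

section Ring

variable {R : Type*} [Ring R]

theorem leadingCoeff_eq_neg_of_natDegree_add_lt {p q : R[X]}
    (h : (p + q).natDegree < p.natDegree) : q.leadingCoeff = -p.leadingCoeff := by
  have hcoeff : (p + q).coeff p.natDegree = 0 := coeff_eq_zero_of_natDegree_lt h
  rw [coeff_add, coeff_natDegree, natDegree_eq_of_natDegree_add_lt_left p q h,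
    coeff_natDegree] at hcoeff
  exact eq_neg_of_add_eq_zero_right hcoeff

theorem leadingCoeff_pow_eq_neg_of_natDegree_add_pow_lt [NoZeroDivisors R] {p q : R[X]} {d : ℕ}
    (h : (p + q ^ d).natDegree < p.natDegree) : q.leadingCoeff ^ d = -p.leadingCoeff := by
  rw [← leadingCoeff_pow, leadingCoeff_eq_neg_of_natDegree_add_lt h]

theorem leadingCoeff_C_mul_X_sub_C_pow (c a : R) (k : ℕ) :
    (C c * (X - C a) ^ k).leadingCoeff = c :=
  ((monic_X_sub_C a).pow k).leadingCoeff_C_mul c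

theorem natDegree_C_mul_X_sub_C_pow {c : R} (hc : c ≠ 0) (a : R) (k : ℕ) :
    (C c * (X - C a) ^ k).natDegree = k := by
  have : Nontrivial R := nontrivial_of_ne c 0 hc
  have hmonic : ((X - C a) ^ k).Monic := (monic_X_sub_C a).pow k
  rw [natDegree_C_mul_of_mul_ne_zero (by rwa [hmonic.leadingCoeff, mul_one]),
    (monic_X_sub_C a).natDegree_pow, natDegree_X_sub_C, mul_one]

end Ring

section NoZeroDivisors

variable {R : Type*} [CommRing R] [NoZeroDivisors R] {d : ℕ}

theorem natDegree_pow_sub_pow_of_leadingCoeff_eq {p q : R[X]} (hd : (d : R) ≠ 0)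
    (hdeg : p.natDegree = q.natDegree) (hlead : p.leadingCoeff = q.leadingCoeff)
    (hpow : p ^ d ≠ q ^ d) :
    (p ^ d - q ^ d).natDegree = (d - 1) * p.natDegree + (p - q).natDegree := by
  have hp : p ≠ 0 := by
    rintro rfl
    exact hpow (by rw [leadingCoeff_eq_zero.mp (hlead.symm.trans leadingCoeff_zero)])
  have htop : (d : R) * p.leadingCoeff ^ (d - 1) ≠ 0 :=
    mul_ne_zero hd (pow_ne_zero _ (leadingCoeff_ne_zero.mpr hp))
  have hfactor : (∑ i ∈ Finset.range d, p ^ i * q ^ (d - 1 - i)) * (p - q) = p ^ d - q ^ d :=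
    geom_sum₂_mul p q d
  have hne : (∑ i ∈ Finset.range d, p ^ i * q ^ (d - 1 - i)) * (p - q) ≠ 0 := by
    rwa [hfactor, sub_ne_zero]
  rw [← hfactor, natDegree_mul (left_ne_zero_of_mul hne) (right_ne_zero_of_mul hne),
    natDegree_geom_sum₂_of_leadingCoeff_eq hdeg hlead htop]

theorem stmt0_general (hd : (d : R) ≠ 0) (n m : ℕ) (hnm : n < m)
    (a A : R) (hA : A ≠ 0) (v : R[X]) (hne : C A * (X - C a) ^ m + v ^ d ≠ 0)
    (hdeg : (C A * (X - C a) ^ m + v ^ d).natDegree = n) :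
    d ∣ m ∧ v.natDegree = m / d ∧ v.leadingCoeff ^ d = -A ∧
      0 ≤ (n : ℤ) - (m : ℤ) + ((m / d : ℕ) : ℤ) ∧
      v - C v.leadingCoeff * (X - C a) ^ (m / d) ≠ 0 ∧
      ((v - C v.leadingCoeff * (X - C a) ^ (m / d)).natDegree : ℤ)
        = (n : ℤ) - (m : ℤ) + ((m / d : ℕ) : ℤ) := by
  have hd0 : 0 < d := Nat.pos_of_ne_zero (by rintro rfl; exact hd Nat.cast_zero)
  have hm : (C A * (X - C a) ^ m).natDegree = m := natDegree_C_mul_X_sub_C_pow hA a m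
  have hcancel : (C A * (X - C a) ^ m + v ^ d).natDegree < (C A * (X - C a) ^ m).natDegree := by
    rwa [hm, hdeg]
  have hmul : m = d * v.natDegree :=
    hm.symm.trans (natDegree_eq_mul_of_natDegree_add_pow_lt hcancel)
  have hlead : v.leadingCoeff ^ d = -A := by
    rw [leadingCoeff_pow_eq_neg_of_natDegree_add_pow_lt hcancel, leadingCoeff_C_mul_X_sub_C_pow]
  have hB : v.leadingCoeff ≠ 0 := ne_zero_pow hd0.ne' (hlead ▸ neg_ne_zero.mpr hA)
  rw [Nat.div_eq_of_eq_mul_right hd0 hmul]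
  set w : R[X] := C v.leadingCoeff * (X - C a) ^ v.natDegree with hw
  have hfactor : C A * (X - C a) ^ m + v ^ d = v ^ d - w ^ d := by
    rw [hw, mul_pow, ← C_pow, hlead, ← pow_mul, mul_comm v.natDegree, ← hmul, C_neg, neg_mul,
      sub_neg_eq_add, add_comm]
  have hpow : v ^ d ≠ w ^ d := by rwa [hfactor, sub_ne_zero] at hne
  have hn : n = (d - 1) * v.natDegree + (v - w).natDegree := by
    rw [← hdeg, hfactor]
    exact natDegree_pow_sub_pow_of_leadingCoeff_eq hd (natDegree_C_mul_X_sub_C_pow hB a _).symm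
      (leadingCoeff_C_mul_X_sub_C_pow _ a _).symm hpow
  have hsplit : m = (d - 1) * v.natDegree + v.natDegree := by
    rw [hmul, ← Nat.succ_mul, Nat.succ_eq_add_one, Nat.sub_add_cancel hd0]
  have hvw : v - w ≠ 0 := sub_ne_zero.mpr (ne_of_apply_ne (· ^ d) hpow)
  refine ⟨⟨_, hmul⟩, rfl, hlead, ?_, hvw, ?_⟩ <;> omega

end NoZeroDivisors

/-- Let `K` be an algebraically closed field, `d ≥ 2` an integer with
`char K ∤ d`, and `m > n ≥ 1` integers. Let `a ∈ K`, `A ∈ K` nonzero, and `v ∈ K[x]` such that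
`h = A (x-a)^m + v^d` has degree `n`. Then `d ∣ m`; setting `ℓ = m / d`, `v` has degree `ℓ`
and its leading coefficient `B` satisfies `B ^ d = -A`; moreover `n - m + ℓ ≥ 0` and
`q := v - B (x-a)^ℓ` is nonzero of degree exactly `n - m + ℓ`. -/
theorem stmt0 {K : Type*} [Field K] [IsAlgClosed K] (d : ℕ) (hd : 2 ≤ d)
    (hchar : ¬ (ringChar K ∣ d)) (n m : ℕ) (hn : 1 ≤ n) (hnm : n < m)
    (a A : K) (hA : A ≠ 0) (v : Polynomial K)
    (hdeg : (Polynomial.C A * (Polynomial.X - Polynomial.C a) ^ m + v ^ d).natDegree = n) :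
    d ∣ m ∧ v.natDegree = m / d ∧ v.leadingCoeff ^ d = -A ∧
      0 ≤ (n : ℤ) - (m : ℤ) + ((m / d : ℕ) : ℤ) ∧
      v - Polynomial.C v.leadingCoeff * (Polynomial.X - Polynomial.C a) ^ (m / d) ≠ 0 ∧
      ((v - Polynomial.C v.leadingCoeff *
          (Polynomial.X - Polynomial.C a) ^ (m / d)).natDegree : ℤ)
        = (n : ℤ) - (m : ℤ) + ((m / d : ℕ) : ℤ) :=
  stmt0_general (mt (ringChar.spec K d).mp hchar) n m hnm a A hA v
    (ne_zero_of_natDegree_gt (hdeg ▸ hn)) hdeg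
end

section
/- Let K be an algebraically closed field, d ≥ 2 an integer with char(K) not dividing d, and n, m integers with d < n < m, d dividing m, and n − m + m/d ≥ 0. Set ℓ = m/d. Assume char(K) satisfies one of: (i) char(K) = 0; (ii) n − m + ℓ = 0 and char(K) does not divide ℓ; (iii) n − m + ℓ > 0 and char(K) does not divide n − m + ℓ. Let A and D be nonzero elements of K and choose B ∈ K with B^d = −A. Then the set of C ∈ K for which the polynomial f_C(x) = A·x^m + (B·x^ℓ + D·x^{n−m+ℓ} + C)^d has a repeated root in K is finite. -/
open Polynomial

/-!
Put `u = B x^ℓ` and `w = B x^ℓ + D x^s`. Over an algebraic closure, `f_c = (w + c)^d - u^d` is the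
product of the polynomials `w + c - z u` over the `d`-th roots of unity `z`, and two distinct
factors vanish together only at a zero of `u`. A repeated root of `f_c` is therefore either a zero
`a` of `u`, and then `c = -w(a)`, or a repeated root of a single factor, and then `-c` is a critical
value of `w - z u`. A polynomial has finitely many critical values unless it is nonconstant with
zero derivative, and the arithmetic conditions on `ℓ` and `s` exclude this for each of the
binomials `w - z u`.
-/

/-- The critical values of a polynomial `p`: the values of `p` at the roots in `R` of its formal
derivative. -/
def criticalValues {R : Type*} [Semiring R] (p : R[X]) : Set R :=
  (fun a => p.eval a) '' {a | p.derivative.IsRoot a}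

theorem finite_criticalValues {R : Type*} [CommRing R] [IsDomain R] {p : R[X]}
    (hp : derivative p = 0 → p.natDegree = 0) : (criticalValues p).Finite := by
  by_cases hp' : derivative p = 0
  · obtain ⟨b, rfl⟩ := natDegree_eq_zero.mp (hp hp')
    refine (Set.finite_singleton b).subset ?_
    rintro _ ⟨a, -, rfl⟩
    exact eval_C
  · exact (finite_setOfPred_isRoot hp').image _

theorem isRoot_and_isRoot_derivative_of_sq_dvd {R : Type*} [CommRing R] {p : R[X]} {a : R}
    (h : (X - C a) ^ 2 ∣ p) : p.IsRoot a ∧ p.derivative.IsRoot a := by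
  have h' : X - C a ∣ derivative p := by
    simpa only [Nat.add_one_sub_one, pow_one] using pow_sub_one_dvd_derivative_of_pow_dvd h
  exact ⟨dvd_iff_isRoot.mp ((dvd_pow_self _ two_ne_zero).trans h), dvd_iff_isRoot.mp h'⟩

theorem eval_eq_neg_of_isRoot_pow_sub_pow {R : Type*} [CommRing R] [NoZeroDivisors R] {d : ℕ}
    (hd : d ≠ 0) {u w : R[X]} {a c : R} (hu : u.IsRoot a)
    (h : ((w + C c) ^ d - u ^ d).IsRoot a) : w.eval a = -c := by
  rw [IsRoot, eval_sub, eval_pow, eval_pow, hu.eq_zero, zero_pow hd, sub_zero, eval_add,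
    eval_C] at h
  exact eq_neg_of_add_eq_zero_left ((pow_eq_zero_iff hd).mp h)

section PowSubPow

variable {K : Type*} [Field K] {d : ℕ}

theorem exists_pow_eq_one_isRoot_sub_of_sq_dvd_pow_sub_pow (hd : (d : K) ≠ 0) {p u : K[X]} {a : K}
    (hu : u.eval a ≠ 0) (h : (X - C a) ^ 2 ∣ p ^ d - u ^ d) :
    ∃ z : K, z ^ d = 1 ∧ (p - C z * u).IsRoot a ∧ (derivative (p - C z * u)).IsRoot a := by
  obtain ⟨k, rfl⟩ : ∃ k, d = k + 1 := Nat.exists_eq_succ_of_ne_zero (by rintro rfl; simp at hd)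
  obtain ⟨hroot, hroot'⟩ := isRoot_and_isRoot_derivative_of_sq_dvd h
  obtain ⟨z, hz⟩ : ∃ z, p.eval a = z * u.eval a := ⟨_, (div_mul_cancel₀ _ hu).symm⟩
  have hz1 : z ^ (k + 1) = 1 := by
    rw [IsRoot, eval_sub, eval_pow, eval_pow, hz, mul_pow, sub_eq_zero] at hroot
    exact mul_right_cancel₀ (pow_ne_zero _ hu) (hroot.trans (one_mul _).symm)
  have hderiv : z ^ k * p.derivative.eval a = u.derivative.eval a := by
    simp only [IsRoot, derivative_sub, derivative_pow, Nat.add_one_sub_one, eval_sub, eval_mul,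
      eval_C, eval_pow, hz] at hroot'
    refine mul_left_cancel₀ (mul_ne_zero hd (pow_ne_zero k hu)) ?_
    linear_combination hroot'
  refine ⟨z, hz1, ?_, ?_⟩
  · simp only [IsRoot, eval_sub, eval_mul, eval_C, hz, sub_self]
  · simp only [IsRoot, derivative_sub, derivative_C_mul, eval_sub, eval_mul, eval_C]
    linear_combination z * hderiv - p.derivative.eval a * hz1

theorem neg_mem_criticalValues_of_sq_dvd_pow_sub_pow (hd : (d : K) ≠ 0) {u w : K[X]} {a c : K}
    (hu : u.eval a ≠ 0) (h : (X - C a) ^ 2 ∣ (w + C c) ^ d - u ^ d) :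
    ∃ z : K, z ^ d = 1 ∧ -c ∈ criticalValues (w - C z * u) := by
  obtain ⟨z, hz, hroot, hroot'⟩ := exists_pow_eq_one_isRoot_sub_of_sq_dvd_pow_sub_pow hd hu h
  have hshift : w + C c - C z * u = (w - C z * u) + C c := by ring
  rw [hshift, IsRoot, eval_add, eval_C] at hroot
  rw [hshift, derivative_add, derivative_C, add_zero] at hroot'
  exact ⟨z, hz, a, hroot', eq_neg_of_add_eq_zero_left hroot⟩

theorem finite_setOf_exists_sq_dvd_pow_sub_pow (hd : (d : K) ≠ 0) {u w : K[X]} (hu : u ≠ 0)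
    (hw : ∀ z : K, z ^ d = 1 →
      derivative (w - C z * u) = 0 → (w - C z * u).natDegree = 0) :
    {c : K | ∃ a : K, (X - C a) ^ 2 ∣ (w + C c) ^ d - u ^ d}.Finite := by
  have hd0 : d ≠ 0 := by rintro rfl; exact hd Nat.cast_zero
  have hvalues : ((fun a => w.eval a) '' {a | u.IsRoot a}).Finite :=
    (finite_setOfPred_isRoot hu).image _
  have hcritical : (⋃ z ∈ nthRootsFinset d (1 : K), criticalValues (w - C z * u)).Finite :=
    (nthRootsFinset d (1 : K)).finite_toSet.biUnion fun z hz =>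
      finite_criticalValues (hw z ((mem_nthRootsFinset hd0.bot_lt 1).mp hz))
  refine ((hvalues.union hcritical).preimage neg_injective.injOn).subset ?_
  rintro c ⟨a, ha⟩
  by_cases hua : u.IsRoot a
  · have hroot := (isRoot_and_isRoot_derivative_of_sq_dvd ha).1
    exact Or.inl ⟨a, hua, eval_eq_neg_of_isRoot_pow_sub_pow hd0 hua hroot⟩
  · obtain ⟨z, hz, hc⟩ := neg_mem_criticalValues_of_sq_dvd_pow_sub_pow hd hua ha
    exact Or.inr (Set.mem_biUnion ((mem_nthRootsFinset hd0.bot_lt 1).mpr hz) hc)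

end PowSubPow

section Binomial

variable {R : Type*} [Semiring R] [NoZeroDivisors R]

theorem coeff_eq_zero_of_derivative_eq_zero {p : R[X]} (hp : derivative p = 0) {k : ℕ}
    (hk : (k : R) ≠ 0) : p.coeff k = 0 := by
  obtain ⟨j, rfl⟩ : ∃ j, k = j + 1 := Nat.exists_eq_succ_of_ne_zero (by rintro rfl; simp at hk)
  have hcoeff : p.coeff (j + 1) * ((j + 1 : ℕ) : R) = 0 := by
    rw [Nat.cast_succ, ← coeff_derivative, hp, coeff_zero]
  exact (mul_eq_zero.mp hcoeff).resolve_right hk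

theorem natDegree_C_mul_X_pow_add_C_eq_zero_of_derivative_eq_zero {ℓ : ℕ} (hℓ : (ℓ : R) ≠ 0)
    {b e : R} (h : derivative (C b * X ^ ℓ + C e) = 0) : (C b * X ^ ℓ + C e).natDegree = 0 := by
  have hℓ0 : ℓ ≠ 0 := by rintro rfl; exact hℓ Nat.cast_zero
  have hb : b = 0 := by
    simpa [coeff_C, hℓ0] using coeff_eq_zero_of_derivative_eq_zero h hℓ
  simp [hb]

theorem natDegree_binomial_eq_zero_of_derivative_eq_zero {ℓ s : ℕ} (hs : (s : R) ≠ 0) {b e : R}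
    (he : e ≠ 0) (h : derivative (C b * X ^ ℓ + C e * X ^ s) = 0) :
    (C b * X ^ ℓ + C e * X ^ s).natDegree = 0 := by
  have hcoeff := coeff_eq_zero_of_derivative_eq_zero h hs
  rw [coeff_add, coeff_C_mul_X_pow, coeff_C_mul_X_pow, if_pos rfl] at hcoeff
  obtain rfl | hsl := eq_or_ne s ℓ
  · rw [if_pos rfl] at hcoeff
    rw [← add_mul, ← C_add, hcoeff, C_0, zero_mul, natDegree_zero]
  · rw [if_neg hsl, zero_add] at hcoeff
    exact absurd hcoeff he

theorem natDegree_binomial_eq_zero_of_ringChar {R : Type*} [Ring R] [IsDomain R] {ℓ s : ℕ}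
    (hℓs : ringChar R = 0 ∨ (s = 0 ∧ ¬ ringChar R ∣ ℓ) ∨ ¬ ringChar R ∣ s) {b e : R} (he : e ≠ 0)
    (h : derivative (C b * X ^ ℓ + C e * X ^ s) = 0) :
    (C b * X ^ ℓ + C e * X ^ s).natDegree = 0 := by
  rcases hℓs with hchar | ⟨rfl, hℓ⟩ | hs
  · have : CharZero R := (CharP.ringChar_zero_iff_CharZero R).mp hchar
    exact derivative_eq_zero.mp h
  · rw [pow_zero, mul_one] at h ⊢
    exact natDegree_C_mul_X_pow_add_C_eq_zero_of_derivative_eq_zero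
      (mt (ringChar.spec R ℓ).mp hℓ) h
  · exact natDegree_binomial_eq_zero_of_derivative_eq_zero (mt (ringChar.spec R s).mp hs) he h

end Binomial

theorem stmt3_general {K : Type*} [Field K] {d ℓ s : ℕ} (hd : ¬ ringChar K ∣ d)
    (hℓs : ringChar K = 0 ∨ (s = 0 ∧ ¬ ringChar K ∣ ℓ) ∨ ¬ ringChar K ∣ s)
    {A B D : K} (hA : A ≠ 0) (hD : D ≠ 0) (hB : B ^ d = -A) :
    {c : K | ∃ a : K, (X - C a) ^ 2 ∣
      C A * X ^ (d * ℓ) + (C B * X ^ ℓ + C D * X ^ s + C c) ^ d}.Finite := by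
  have hB0 : B ≠ 0 := by
    rintro rfl
    rw [zero_pow (by rintro rfl; exact hd (dvd_zero _)), zero_eq_neg] at hB
    exact hA hB
  have hfactor (c : K) : C A * X ^ (d * ℓ) + (C B * X ^ ℓ + C D * X ^ s + C c) ^ d =
      (C B * X ^ ℓ + C D * X ^ s + C c) ^ d - (C B * X ^ ℓ) ^ d := by
    rw [mul_pow, ← C_pow, hB, C_neg, ← pow_mul, mul_comm ℓ d]
    ring
  have hbinomial (z : K) : C B * X ^ ℓ + C D * X ^ s - C z * (C B * X ^ ℓ) =
      C ((1 - z) * B) * X ^ ℓ + C D * X ^ s := by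
    rw [C_mul, C_sub, C_1]
    ring
  simp only [hfactor]
  refine finite_setOf_exists_sq_dvd_pow_sub_pow (mt (ringChar.spec K d).mp hd)
    (mul_ne_zero (C_ne_zero.mpr hB0) (pow_ne_zero ℓ X_ne_zero)) fun z _ => ?_
  rw [hbinomial]
  exact natDegree_binomial_eq_zero_of_ringChar hℓs hD

/-- With `d ≥ 2`, `char K ∤ d`, `d < n < m`, `d ∣ m`, `n - m + m/d ≥ 0`,
`ℓ = m/d`, `s = n - m + ℓ`, assuming `char K = 0`, or `s = 0` and `char K ∤ ℓ`, or `s > 0` and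
`char K ∤ s`: for nonzero `A, D ∈ K` and `B` with `B^d = -A`, the set of `C ∈ K` for which
`f_C = A x^m + (B x^ℓ + D x^s + C)^d` has a repeated root in `K` is finite. -/
theorem stmt3 {K : Type*} [Field K] [IsAlgClosed K] (d : ℕ) (hd : 2 ≤ d)
    (hchar : ¬ (ringChar K ∣ d)) (n m : ℕ) (hdn : d < n) (hnm : n < m) (hdvd : d ∣ m)
    (hge : 0 ≤ (n : ℤ) - (m : ℤ) + ((m / d : ℕ) : ℤ))
    (hcase : ringChar K = 0
      ∨ (n + m / d - m = 0 ∧ ¬ (ringChar K ∣ m / d))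
      ∨ (0 < n + m / d - m ∧ ¬ (ringChar K ∣ (n + m / d - m))))
    (A D : K) (hA : A ≠ 0) (hD : D ≠ 0) (B : K) (hB : B ^ d = -A) :
    {C : K | ∃ α : K, (Polynomial.X - Polynomial.C α) ^ 2 ∣
      (Polynomial.C A * Polynomial.X ^ m
        + (Polynomial.C B * Polynomial.X ^ (m / d)
            + Polynomial.C D * Polynomial.X ^ (n + m / d - m)
            + Polynomial.C C) ^ d)}.Finite := by
  simpa only [Nat.mul_div_cancel' hdvd] using
    stmt3_general hchar (hcase.imp_right (Or.imp_right And.right)) hA hD hB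
end

section
/- Let K be an algebraically closed field, d ≥ 2 an integer, and n, m integers with d < n < m, gcd(n,d) = 1, d dividing m, and n − m + m/d ≥ 0. Assume that char(K) = 0 or char(K) > n. Then there exist a nonzero A ∈ K and a polynomial v ∈ K[x] of degree m/d such that f(x) = A·x^m + v(x)^d is a monic polynomial of degree n with no repeated roots. -/
open Polynomial

/-!
Look for `f = v ^ d - X ^ (d * k)` with `v = X ^ k + q` and `deg q = s < k`. Such an `f` is `q`
times a sum of `d` monic polynomials of degree `(d - 1) * k`, so it is monic of degree
`(d - 1) * k + s` as soon as `q` has leading coefficient `1 / d`.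

If `d` is invertible and `u`, `v` are coprime, a repeated root of `v ^ d - u ^ d` is a root of
their Wronskian. For `u = X ^ k` and `q = b X ^ s - c` the Wronskian is, up to a unit and a power of
`X`, the polynomial `g = q - (s / k) b X ^ s`. Modulo `g`, `f` is congruent to
`P = (X ^ k + (s / k) b X ^ s) ^ d - X ^ (d * k)`, which does not involve `c`, while the polynomials
`g` for distinct `c` have no common root. Since `P ≠ 0`, all but finitely many `c` make `g` coprime
to `P`, hence to `f`. When `s = 0` this `P` vanishes, but `q` constant already makes the Wronskian a
unit times a power of `X`.
-/

lemma natCast_ne_zero_of_ringChar {R : Type*} [NonAssocSemiring R] {n j : ℕ}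
    (hn : ringChar R = 0 ∨ n < ringChar R) (hj : j ≠ 0) (hjn : j ≤ n) : (j : R) ≠ 0 := by
  rw [Ne, ringChar.spec]
  rcases hn with h0 | hlt
  · rwa [h0, zero_dvd_iff]
  · exact Nat.not_dvd_of_pos_of_lt (Nat.pos_of_ne_zero hj) (hjn.trans_lt hlt)

lemma isCoprime_add_pow_sub_iff {R : Type*} [CommRing R] {x y z : R} {d : ℕ} :
    IsCoprime ((x + y) ^ d - z) y ↔ IsCoprime (x ^ d - z) y := by
  obtain ⟨w, hw⟩ : y ∣ (x + y) ^ d - x ^ d := by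
    simpa using sub_dvd_pow_sub_pow (x + y) x d
  rw [← sub_add_sub_cancel' (x ^ d) z ((x + y) ^ d), hw, IsCoprime.add_mul_left_left_iff]

section PowSubPow

variable {R : Type*} [CommRing R] {u v : R[X]} {d : ℕ}

lemma natDegree_pow_mul_pow_of_monic (hu : u.Monic) (hv : v.Monic)
    (huv : v.natDegree = u.natDegree) (i j : ℕ) :
    (v ^ i * u ^ j).natDegree = (i + j) * u.natDegree := by
  rw [(hv.pow i).natDegree_mul (hu.pow j), hv.natDegree_pow, hu.natDegree_pow, huv, add_mul]

lemma natDegree_geom_sum₂_le_of_monic (hu : u.Monic) (hv : v.Monic)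
    (huv : v.natDegree = u.natDegree) :
    (∑ i ∈ Finset.range d, v ^ i * u ^ (d - 1 - i)).natDegree ≤ (d - 1) * u.natDegree := by
  refine natDegree_sum_le_of_forall_le _ _ fun i hi => ?_
  have hid : i + (d - 1 - i) = d - 1 := by grind
  rw [natDegree_pow_mul_pow_of_monic hu hv huv, hid]

lemma coeff_geom_sum₂_of_monic (hu : u.Monic) (hv : v.Monic)
    (huv : v.natDegree = u.natDegree) :
    (∑ i ∈ Finset.range d, v ^ i * u ^ (d - 1 - i)).coeff ((d - 1) * u.natDegree) = d := by
  have hterm : ∀ i ∈ Finset.range d,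
      (v ^ i * u ^ (d - 1 - i)).coeff ((d - 1) * u.natDegree) = 1 := by
    intro i hi
    have hid : i + (d - 1 - i) = d - 1 := by grind
    rw [← hid, ← natDegree_pow_mul_pow_of_monic hu hv huv]
    simpa only [hid] using ((hv.pow i).mul (hu.pow (d - 1 - i))).coeff_natDegree
  rw [finsetSum_coeff, Finset.sum_congr rfl hterm, Finset.sum_const, Finset.card_range,
    nsmul_one]

lemma natDegree_pow_sub_pow_le_of_monic (hu : u.Monic) (hv : v.Monic)
    (huv : v.natDegree = u.natDegree) :
    (v ^ d - u ^ d).natDegree ≤ (d - 1) * u.natDegree + (v - u).natDegree := by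
  rw [← geom_sum₂_mul]
  exact natDegree_mul_le_of_le (natDegree_geom_sum₂_le_of_monic hu hv huv) le_rfl

lemma coeff_pow_sub_pow_of_monic (hu : u.Monic) (hv : v.Monic)
    (huv : v.natDegree = u.natDegree) :
    (v ^ d - u ^ d).coeff ((d - 1) * u.natDegree + (v - u).natDegree) =
      d * (v - u).leadingCoeff := by
  rw [← geom_sum₂_mul, coeff_mul_add_eq_of_natDegree_le
    (natDegree_geom_sum₂_le_of_monic hu hv huv) le_rfl, coeff_geom_sum₂_of_monic hu hv huv,
    coeff_natDegree]

lemma mul_derivative_pow_sub_pow (u v : R[X]) (d : ℕ) :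
    v * derivative (v ^ d - u ^ d) =
      (d : R[X]) * derivative v * (v ^ d - u ^ d) +
        (d : R[X]) * (u ^ (d - 1) * wronskian u v) := by
  cases d with
  | zero => simp
  | succ d =>
    simp only [derivative_sub, derivative_pow_succ, wronskian, Nat.add_sub_cancel, map_add,
      map_natCast, map_one, Nat.cast_add, Nat.cast_one]
    ring

lemma separable_pow_sub_pow (hd : IsUnit (d : R)) (huv : IsCoprime u v)
    (hw : IsCoprime (v ^ d - u ^ d) (wronskian u v)) : (v ^ d - u ^ d).Separable := by
  rcases eq_or_ne d 0 with rfl | hd0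
  · have : Subsingleton R := subsingleton_of_zero_eq_one (by simpa using hd)
    exact separable_of_subsingleton _
  have hu : IsCoprime (v ^ d - u ^ d) u := by
    rw [← mul_pow_sub_one hd0 u]
    exact IsCoprime.sub_mul_left_left_iff.2 huv.symm.pow_left
  have hdX : IsUnit (d : R[X]) := by simpa using hd.map C
  have hcop : IsCoprime (v ^ d - u ^ d) (v * derivative (v ^ d - u ^ d)) := by
    rw [mul_derivative_pow_sub_pow, IsCoprime.mul_add_right_right_iff,
      isCoprime_mul_unit_left_right hdX]
    exact hu.pow_right.mul_right hw
  exact hcop.of_mul_right_right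

end PowSubPow

section XPowAdd

variable {R : Type*} [CommRing R] [Nontrivial R] {q : R[X]} {d k : ℕ}

lemma natDegree_X_pow_add_of_degree_lt (hq : q.degree < k) : (X ^ k + q).natDegree = k := by
  rw [natDegree_add_eq_left_of_degree_lt (by rwa [degree_X_pow]), natDegree_X_pow]

lemma natDegree_X_pow_add_pow_sub_le (hq : q.degree < k) :
    ((X ^ k + q) ^ d - (X ^ k) ^ d).natDegree ≤ (d - 1) * k + q.natDegree := by
  simpa [natDegree_X_pow_add_of_degree_lt hq] using
    natDegree_pow_sub_pow_le_of_monic (d := d) (monic_X_pow k) (monic_X_pow_add hq)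

lemma coeff_X_pow_add_pow_sub (hq : q.degree < k) :
    ((X ^ k + q) ^ d - (X ^ k) ^ d).coeff ((d - 1) * k + q.natDegree) =
      d * q.leadingCoeff := by
  simpa [natDegree_X_pow_add_of_degree_lt hq] using
    coeff_pow_sub_pow_of_monic (d := d) (monic_X_pow k) (monic_X_pow_add hq)

end XPowAdd

lemma wronskian_X_pow {R : Type*} [CommRing R] {k : ℕ} (hk : k ≠ 0) (q : R[X]) :
    wronskian (X ^ k) q = X ^ (k - 1) * (X * derivative q - (k : R[X]) * q) := by
  rw [wronskian, derivative_X_pow, ← mul_pow_sub_one hk X, map_natCast]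
  ring

section Field

variable {K : Type*} [Field K]

lemma finite_setOf_not_isCoprime_sub_C {p : K[X]} (hp : p ≠ 0) (g : K[X]) :
    {c : K | ¬ IsCoprime p (g - C c)}.Finite := by
  classical
  let L := AlgebraicClosure K
  have hfin : ((p.aroots L).toFinset.image fun x => aeval x g : Set L).Finite :=
    Finset.finite_toSet _
  refine (hfin.preimage (algebraMap K L).injective.injOn).subset fun c hc => ?_
  rw [Set.mem_ofPred_eq, isCoprime_iff_aeval_ne_zero_of_isAlgClosed K L] at hc
  push Not at hc
  obtain ⟨x, hpx, hgx⟩ := hc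
  rw [map_sub, aeval_C, sub_eq_zero] at hgx
  simpa using ⟨x, ⟨hp, hpx⟩, hgx⟩

lemma separable_X_pow_add_pow_sub {d k : ℕ} (hd : (d : K) ≠ 0) (hk : k ≠ 0) {q : K[X]}
    (hq0 : q.coeff 0 ≠ 0)
    (hq : IsCoprime ((X ^ k + q) ^ d - (X ^ k) ^ d) (X * derivative q - (k : K[X]) * q)) :
    ((X ^ k + q) ^ d - (X ^ k) ^ d).Separable := by
  have hd0 : d ≠ 0 := by rintro rfl; simp at hd
  have hXv : IsCoprime X (X ^ k + q) := by
    rw [irreducible_X.coprime_iff_not_dvd, X_dvd_iff]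
    simpa [hk.symm, coeff_X_pow] using hq0
  have hXf : IsCoprime ((X ^ k + q) ^ d - (X ^ k) ^ d) X := by
    rw [isCoprime_comm, irreducible_X.coprime_iff_not_dvd, X_dvd_iff]
    simpa [hk, hd0, coeff_zero_eq_eval_zero] using hq0
  refine separable_pow_sub_pow hd.isUnit hXv.pow_left ?_
  rw [wronskian_add_right, wronskian_self_eq_zero, zero_add, wronskian_X_pow hk]
  exact hXf.pow_right.mul_right hq

lemma X_mul_derivative_sub_natCast_mul_binomial {k : ℕ} (hk : (k : K) ≠ 0) (s : ℕ) (b c : K) :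
    X * derivative (C b * X ^ s - C c) - (k : K[X]) * (C b * X ^ s - C c) =
      C (-k : K) * (C (b - s * b / k) * X ^ s - C c) := by
  have hX : (X : K[X]) * derivative (X ^ s) = C (s : K) * X ^ s := by
    cases s with
    | zero => simp
    | succ s =>
      rw [derivative_X_pow_succ, Nat.cast_add_one]
      ring
  have hkb : (k : K[X]) * C (s * b / k) = C (s : K) * C b := by
    rw [← C_eq_natCast, ← C_mul, ← C_mul, mul_div_cancel₀ _ hk]
  rw [derivative_sub, derivative_C_mul, derivative_C, C_sub, C_neg, C_eq_natCast]
  linear_combination C b * hX - X ^ s * hkb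

lemma exists_separable_X_pow_add_binomial_pow_sub [Infinite K] {d k s : ℕ} (hd : (d : K) ≠ 0)
    (hk : (k : K) ≠ 0) (hs : (s : K) ≠ 0) (hsk : s < k) {b : K} (hb : b ≠ 0) :
    ∃ c : K, ((X ^ k + (C b * X ^ s - C c)) ^ d - (X ^ k) ^ d).Separable := by
  set e : K := s * b / k
  have he : e ≠ 0 := div_ne_zero (mul_ne_zero hs hb) hk
  have hs0 : s ≠ 0 := by rintro rfl; simp at hs
  have hP : ((X ^ k + C e * X ^ s) ^ d - (X ^ k) ^ d : K[X]) ≠ 0 := by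
    intro h
    have hcoeff := coeff_X_pow_add_pow_sub (d := d)
      ((degree_C_mul_X_pow_le s e).trans_lt (by exact_mod_cast hsk))
    rw [h, coeff_zero, leadingCoeff_C_mul_X_pow] at hcoeff
    exact mul_ne_zero hd he hcoeff.symm
  obtain ⟨c, hc⟩ :=
    ((finite_setOf_not_isCoprime_sub_C hP (C (b - e) * X ^ s)).insert 0).exists_notMem
  rw [Set.mem_insert_iff, not_or, Set.mem_ofPred_eq, not_not] at hc
  obtain ⟨hc0, hPg⟩ := hc
  refine ⟨c, separable_X_pow_add_pow_sub hd (by rintro rfl; simp at hk) ?_ ?_⟩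
  · simpa [hs0.symm, coeff_X_pow] using hc0
  have hq : C b * X ^ s - C c = C e * X ^ s + (C (b - e) * X ^ s - C c) := by
    rw [C_sub]
    ring
  rw [X_mul_derivative_sub_natCast_mul_binomial hk,
    isCoprime_mul_unit_left_right (isUnit_C.2 (neg_ne_zero.2 hk).isUnit), hq, ← add_assoc]
  exact isCoprime_add_pow_sub_iff.2 hPg

lemma exists_separable_X_pow_add_pow_sub [Infinite K] {d k s : ℕ} (hd : (d : K) ≠ 0)
    (hk : (k : K) ≠ 0) (hs : s = 0 ∨ (s : K) ≠ 0) (hsk : s < k) {b : K} (hb : b ≠ 0) :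
    ∃ q : K[X], q.natDegree = s ∧ q.leadingCoeff = b ∧
      ((X ^ k + q) ^ d - (X ^ k) ^ d).Separable := by
  rcases hs with rfl | hs
  · refine ⟨C b, natDegree_C b, leadingCoeff_C b, ?_⟩
    refine separable_X_pow_add_pow_sub hd hsk.ne' (by simpa using hb) ?_
    have hunit : IsUnit (X * derivative (C b) - (k : K[X]) * C b) := by
      rw [derivative_C, mul_zero, zero_sub, IsUnit.neg_iff, ← C_eq_natCast, ← C_mul, isUnit_C]
      exact (mul_ne_zero hk hb).isUnit
    exact isCoprime_one_right.of_isCoprime_of_dvd_right hunit.dvd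
  · obtain ⟨c, hc⟩ := exists_separable_X_pow_add_binomial_pow_sub hd hk hs hsk hb
    have hs0 : s ≠ 0 := by rintro rfl; simp at hs
    refine ⟨C b * X ^ s - C c, ?_, ?_, hc⟩
    · rw [natDegree_sub_C, natDegree_C_mul_X_pow s b hb]
    · rw [leadingCoeff_sub_of_degree_lt, leadingCoeff_C_mul_X_pow]
      rw [degree_C_mul_X_pow s hb]
      exact degree_C_le.trans_lt (by exact_mod_cast Nat.pos_of_ne_zero hs0)

end Field

theorem stmt4_general {K : Type*} [Field K] [Infinite K] (d : ℕ) (hd : 2 ≤ d)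
    (n m : ℕ) (hdn : d < n) (hnm : n < m) (hdvd : d ∣ m)
    (hge : 0 ≤ (n : ℤ) - (m : ℤ) + ((m / d : ℕ) : ℤ))
    (hchar : ringChar K = 0 ∨ n < ringChar K) :
    ∃ (A : K) (v : K[X]), A ≠ 0 ∧ v.natDegree = m / d ∧ (C A * X ^ m + v ^ d).Monic ∧
      (C A * X ^ m + v ^ d).natDegree = n ∧ (C A * X ^ m + v ^ d).Separable := by
  obtain ⟨k, rfl⟩ := hdvd
  rw [Nat.mul_div_cancel_left k (by omega)] at hge ⊢
  have hdk : d * k = (d - 1) * k + k := by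
    rw [Nat.sub_one_mul, Nat.sub_add_cancel (Nat.le_mul_of_pos_left k (by omega))]
  obtain ⟨s, rfl⟩ : ∃ s, n = (d - 1) * k + s := Nat.exists_eq_add_of_le (by omega)
  have hsk : s < k := by omega
  have hkd : k ≤ (d - 1) * k := Nat.le_mul_of_pos_left k (by omega)
  have hd0 : (d : K) ≠ 0 := natCast_ne_zero_of_ringChar hchar (by omega) hdn.le
  have hk0 : (k : K) ≠ 0 := natCast_ne_zero_of_ringChar hchar (by omega) (by omega)
  have hs0 : s = 0 ∨ (s : K) ≠ 0 := or_iff_not_imp_left.2 fun hs =>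
    natCast_ne_zero_of_ringChar hchar hs (by omega)
  obtain ⟨q, rfl, hlead, hsep⟩ :=
    exists_separable_X_pow_add_pow_sub hd0 hk0 hs0 hsk (inv_ne_zero hd0)
  have hqk : q.degree < k := degree_le_natDegree.trans_lt (by exact_mod_cast hsk)
  have hle := natDegree_X_pow_add_pow_sub_le (d := d) hqk
  have hcoeff := coeff_X_pow_add_pow_sub (d := d) hqk
  rw [hlead, mul_inv_cancel₀ hd0] at hcoeff
  have hf : C (-1) * X ^ (d * k) + (X ^ k + q) ^ d = (X ^ k + q) ^ d - (X ^ k) ^ d := by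
    rw [mul_comm d k, pow_mul, C_neg, C_1]
    ring
  refine ⟨-1, X ^ k + q, neg_ne_zero.2 one_ne_zero, natDegree_X_pow_add_of_degree_lt hqk, ?_⟩
  rw [hf]
  exact ⟨monic_of_natDegree_le_of_coeff_eq_one _ hle hcoeff,
    natDegree_eq_of_le_of_coeff_ne_zero hle (hcoeff ▸ one_ne_zero), hsep⟩

/-- Let `K` be algebraically closed, `d ≥ 2`, `d < n < m`, `gcd(n,d) = 1`,
`d ∣ m`, `n - m + m/d ≥ 0`, and `char K = 0` or `char K > n`. Then there exist a nonzero
`A ∈ K` and `v ∈ K[x]` of degree `m/d` such that `f = A x^m + v^d` is monic of degree `n`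
with no repeated roots. -/
theorem stmt4 {K : Type*} [Field K] [IsAlgClosed K] (d : ℕ) (hd : 2 ≤ d)
    (n m : ℕ) (hdn : d < n) (hnm : n < m) (hcop : Nat.Coprime n d) (hdvd : d ∣ m)
    (hge : 0 ≤ (n : ℤ) - (m : ℤ) + ((m / d : ℕ) : ℤ))
    (hchar : ringChar K = 0 ∨ n < ringChar K) :
    ∃ (A : K) (v : Polynomial K), A ≠ 0 ∧ v.natDegree = m / d ∧
      (Polynomial.C A * Polynomial.X ^ m + v ^ d).Monic ∧
      (Polynomial.C A * Polynomial.X ^ m + v ^ d).natDegree = n ∧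
      ∀ α : K, ¬ ((Polynomial.X - Polynomial.C α) ^ 2 ∣
        (Polynomial.C A * Polynomial.X ^ m + v ^ d)) := by
  obtain ⟨A, v, hA, hv, hmonic, hdeg, hsep⟩ := stmt4_general d hd n m hdn hnm hdvd hge hchar
  exact ⟨A, v, hA, hv, hmonic, hdeg, fun α h =>
    not_isUnit_X_sub_C α (isUnit_of_self_mul_dvd_separable hsep (by rwa [← sq]))⟩
end

section
/- Let d ≥ 2 and E ≥ 2 be integers and m a positive integer with gcd(m,d) = 1 and m > d(E−1). Set r = m/d ∈ ℚ and F(x) = (1+x)^m − V_{r,E}(x)^d ∈ ℚ[x]. Then F has degree m, the multiplicity of 0 as a root of F is exactly E, and F has no repeated roots other than 0; equivalently, f(x) := F(x)/x^E is a squarefree polynomial of degree m − E with nonzero constant term. -/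
open Polynomial Finset

/-- The generalized binomial coefficient `C(r, k) = r (r-1) ⋯ (r-k+1) / k!` for `r : ℚ`. -/
def genBinom (r : ℚ) (k : ℕ) : ℚ :=
  (∏ i ∈ Finset.range k, (r - i)) / (Nat.factorial k)

/-- The truncated binomial polynomial `V_{r,E}(x) = Σ_{k=0}^{E-1} C(r,k) x^k ∈ ℚ[x]`. -/
noncomputable def truncBinom (r : ℚ) (E : ℕ) : Polynomial ℚ :=
  ∑ k ∈ Finset.range E, Polynomial.C (genBinom r k) * Polynomial.X ^ k

/-!
The series `(1+x)^r` solves `(1+x) y' = r y`, so its truncation `V = V_{r,E}` satisfies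
`(1+x) V' = r V - c x^{E-1}` with `c = E C(r,E)`, and `d r = m` then gives
`(1+x) F' = m F + d c V^{d-1} x^{E-1}`. Here `c ≠ 0` because `r > E - 1`. As `F(0) = 0` and
`V(0) = 1`, comparing coefficients shows that `F` vanishes to order exactly `E` at `0`. If `p² ∣ F`
with `p` irreducible, then `p` divides `F` and `F'`, hence `V` or `x`; in the first case `p` divides
`(1+x)^m = F + V^d`, so it divides `1+x`, and the equation for `V` again forces `p ∣ x`.
-/

lemma genBinom_succ_mul (r : ℚ) (k : ℕ) :
    genBinom r (k + 1) * (k + 1) = (r - k) * genBinom r k := by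
  have hk : (k.factorial : ℚ) ≠ 0 := by exact_mod_cast k.factorial_ne_zero
  rw [genBinom, genBinom, prod_range_succ, Nat.factorial_succ]
  push_cast
  field_simp

lemma genBinom_ne_zero {r : ℚ} {k : ℕ} (h : ∀ i < k, r ≠ i) : genBinom r k ≠ 0 :=
  div_ne_zero (prod_ne_zero_iff.2 fun i hi => sub_ne_zero.2 (h i (mem_range.1 hi)))
    (by exact_mod_cast k.factorial_ne_zero)

lemma truncBinom_succ (r : ℚ) (E : ℕ) :
    truncBinom r (E + 1) = truncBinom r E + C (genBinom r E) * X ^ E :=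
  sum_range_succ _ _

lemma coeff_zero_truncBinom (r : ℚ) {E : ℕ} (hE : 0 < E) : (truncBinom r E).coeff 0 = 1 := by
  simp [truncBinom, coeff_X_pow, genBinom, hE.ne']

lemma natDegree_truncBinom_le (r : ℚ) (E : ℕ) : (truncBinom r E).natDegree ≤ E - 1 :=
  natDegree_sum_le_of_forall_le _ _ fun k hk =>
    (natDegree_C_mul_X_pow_le _ k).trans (Nat.le_sub_one_of_lt (mem_range.1 hk))

lemma one_add_X_mul_derivative_truncBinom (r : ℚ) (E : ℕ) :
    (1 + X) * derivative (truncBinom r E) =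
      C r * truncBinom r E - C (E * genBinom r E) * X ^ (E - 1) := by
  induction E with
  | zero => simp [truncBinom]
  | succ E ih =>
    have hX : C (E : ℚ) * (X * X ^ (E - 1)) = C (E : ℚ) * X ^ E := by
      rcases E with _ | E
      · simp
      · rw [Nat.add_sub_cancel, pow_succ']
    have hc : C (((E + 1 : ℕ) : ℚ) * genBinom r (E + 1)) =
        (C r - C (E : ℚ)) * C (genBinom r E) := by
      rw [← C_sub, ← C_mul, ← genBinom_succ_mul, mul_comm, Nat.cast_succ]
    rw [truncBinom_succ, derivative_add, mul_add, ih, derivative_C_mul_X_pow, hc,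
      Nat.add_sub_cancel]
    simp only [C_mul]
    linear_combination C (genBinom r E) * hX

section Polynomials

variable {R : Type*} [CommRing R]

lemma natDegree_one_add_X_pow_sub_pow [Nontrivial R] {V : R[X]} {d m : ℕ}
    (h : d * V.natDegree < m) : ((1 + X) ^ m - V ^ d).natDegree = m := by
  have hm : ((1 + X : R[X]) ^ m).natDegree = m := by
    rw [add_comm, ← C_1, natDegree_pow_X_add_C]
  rw [natDegree_sub_eq_left_of_natDegree_lt, hm]
  exact natDegree_pow_le.trans_lt (h.trans_eq hm.symm)

lemma one_add_X_mul_derivative_pow_sub_pow {V W : R[X]} {r : R} {d m : ℕ} (hr : d * r = m)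
    (hV : (1 + X) * derivative V = C r * V - W) :
    (1 + X) * derivative ((1 + X) ^ m - V ^ d) =
      C (m : R) * ((1 + X) ^ m - V ^ d) + C (d : R) * V ^ (d - 1) * W := by
  have hpow (P : R[X]) (k : ℕ) : C (k : R) * (P ^ (k - 1) * P) = C (k : R) * P ^ k := by
    rcases k with _ | k
    · simp
    · rw [Nat.add_sub_cancel, pow_succ]
  have hC : C (d : R) * C r = C (m : R) := by rw [← C_mul, hr]
  rw [derivative_sub, derivative_pow, derivative_pow, derivative_add, derivative_one, derivative_X]
  linear_combination
    hpow (1 + X) m - C (d : R) * V ^ (d - 1) * hV - C r * hpow V d - V ^ d * hC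

lemma coeff_one_add_X_mul_derivative (F : R[X]) (j : ℕ) :
    ((1 + X) * derivative F).coeff j = (j + 1) * F.coeff (j + 1) + j * F.coeff j := by
  rcases j with _ | j
  · simp [add_mul, coeff_derivative]
  · simp only [add_mul, one_mul, coeff_add, coeff_X_mul, coeff_derivative]
    push_cast
    ring

lemma rootMultiplicity_zero_X_pow_mul {f : R[X]} (hf0 : f.coeff 0 ≠ 0) (n : ℕ) :
    (X ^ n * f).rootMultiplicity 0 = n := by
  have hf : f ≠ 0 := by
    rintro rfl
    exact hf0 (coeff_zero 0)
  have hroot : f.rootMultiplicity 0 = 0 :=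
    rootMultiplicity_eq_zero (by rwa [IsRoot, ← coeff_zero_eq_eval_zero])
  simpa [hroot, mul_comm] using rootMultiplicity_mul_X_sub_C_pow (a := 0) (n := n) hf

variable [IsDomain R] [CharZero R]

section DifferentialEquation

variable {F u : R[X]} {a : R} {n : ℕ}

lemma X_pow_dvd_of_one_add_X_mul_derivative_eq
    (hF : (1 + X) * derivative F = C a * F + u * X ^ n) (hF0 : F.coeff 0 = 0) :
    X ^ (n + 1) ∣ F := by
  refine X_pow_dvd_iff.2 fun j hj => ?_
  induction j with
  | zero => exact hF0
  | succ j ih =>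
    have hcoeff := congrArg (coeff · j) hF
    simp only [coeff_one_add_X_mul_derivative, coeff_add, coeff_C_mul, coeff_mul_X_pow',
      ih (by omega), if_neg (show ¬n ≤ j by omega), mul_zero, add_zero] at hcoeff
    exact (mul_eq_zero.1 hcoeff).resolve_left j.cast_add_one_ne_zero

lemma exists_eq_X_pow_mul_of_one_add_X_mul_derivative_eq
    (hF : (1 + X) * derivative F = C a * F + u * X ^ n) (hF0 : F.coeff 0 = 0)
    (hu : u.coeff 0 ≠ 0) : ∃ f : R[X], F = X ^ (n + 1) * f ∧ f.coeff 0 ≠ 0 := by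
  obtain ⟨f, rfl⟩ := X_pow_dvd_of_one_add_X_mul_derivative_eq hF hF0
  have hcoeff := congrArg (coeff · n) hF
  simp only [coeff_one_add_X_mul_derivative, coeff_add, coeff_C_mul, coeff_mul_X_pow',
    coeff_X_pow_mul', le_refl, if_true, Nat.sub_self, n.lt_succ_self.not_ge, if_false,
    mul_zero, add_zero, zero_add] at hcoeff
  exact ⟨f, rfl, right_ne_zero_of_mul (hcoeff.trans_ne hu)⟩

end DifferentialEquation

end Polynomials

section Fields

variable {K : Type*} [Field K]

lemma dvd_X_of_sq_dvd_one_add_X_pow_sub_pow {V p : K[X]} {r c : K} {d m n : ℕ}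
    (hd : (d : K) ≠ 0) (hr : d * r = m) (hc : c ≠ 0)
    (hV : (1 + X) * derivative V = C r * V - C c * X ^ n)
    (hp : Irreducible p) (hpF : p ^ 2 ∣ (1 + X) ^ m - V ^ d) : p ∣ X := by
  have hd0 : d ≠ 0 := by
    rintro rfl
    exact hd Nat.cast_zero
  have dvd_X_of_dvd {b : K} (hb : b ≠ 0) (h : p ∣ C b * X ^ n) : p ∣ X :=
    hp.prime.dvd_of_dvd_pow ((isUnit_C.2 hb.isUnit).dvd_mul_left.1 h)
  have hF : p ∣ (1 + X) ^ m - V ^ d := (dvd_pow_self p two_ne_zero).trans hpF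
  have hF' : p ∣ derivative ((1 + X) ^ m - V ^ d) := by
    simpa using pow_sub_one_dvd_derivative_of_pow_dvd hpF
  have hsource : p ∣ C (d : K) * V ^ (d - 1) * (C c * X ^ n) := by
    rw [← dvd_add_right (hF.mul_left (C (m : K))), ← one_add_X_mul_derivative_pow_sub_pow hr hV]
    exact hF'.mul_left _
  have hsplit : p ∣ V ^ (d - 1) * (C (d * c) * X ^ n) := by
    convert hsource using 1
    rw [C_mul]
    ring
  rcases hp.prime.dvd_or_dvd hsplit with hVpow | hXpow
  · have hpV : p ∣ V := hp.prime.dvd_of_dvd_pow hVpow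
    have hp1X : p ∣ 1 + X := hp.prime.dvd_of_dvd_pow
      ((dvd_sub_left (hpV.trans (dvd_pow_self V hd0))).1 hF)
    refine dvd_X_of_dvd hc ((dvd_sub_right (hpV.mul_left (C r))).1 ?_)
    rw [← hV]
    exact hp1X.mul_right _
  · exact dvd_X_of_dvd (mul_ne_zero hd hc) hXpow

lemma squarefree_of_irreducible_sq_dvd_imp_dvd_X {f : K[X]} (hf0 : f.coeff 0 ≠ 0)
    (h : ∀ p : K[X], Irreducible p → p ^ 2 ∣ f → p ∣ X) : Squarefree f := by
  have hf : f ≠ 0 := by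
    rintro rfl
    exact hf0 (coeff_zero 0)
  refine (squarefree_iff_irreducible_sq_not_dvd_of_ne_zero hf).2 fun p hp hpf => hf0 ?_
  have hXp : X ∣ p :=
    ((hp.associated_of_dvd irreducible_X (h p hp (by rwa [sq]))).dvd_iff_dvd_left).1 dvd_rfl
  exact X_dvd_iff.1 (hXp.trans ((dvd_mul_right p p).trans hpf))

lemma exists_squarefree_one_add_X_pow_sub_pow_eq_X_pow_mul [CharZero K] {V : K[X]} {r c : K}
    {d m n : ℕ} (hd : 0 < d) (hr : d * r = m) (hc : c ≠ 0)
    (hV : (1 + X) * derivative V = C r * V - C c * X ^ n) (hV0 : V.coeff 0 = 1) :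
    ∃ f : K[X], (1 + X) ^ m - V ^ d = X ^ (n + 1) * f ∧ Squarefree f ∧ f.coeff 0 ≠ 0 := by
  have hdK : (d : K) ≠ 0 := Nat.cast_ne_zero.2 hd.ne'
  have hF := one_add_X_mul_derivative_pow_sub_pow hr hV
  rw [← mul_assoc] at hF
  have hF0 : ((1 + X) ^ m - V ^ d).coeff 0 = 0 := by
    simp only [coeff_zero_eq_eval_zero] at hV0 ⊢
    simp [hV0]
  have hu : (C (d : K) * V ^ (d - 1) * C c).coeff 0 ≠ 0 := by
    simp only [coeff_zero_eq_eval_zero] at hV0 ⊢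
    simp [hV0, hd.ne', hc]
  obtain ⟨f, hf, hf0⟩ := exists_eq_X_pow_mul_of_one_add_X_mul_derivative_eq hF hF0 hu
  refine ⟨f, hf, squarefree_of_irreducible_sq_dvd_imp_dvd_X hf0 fun p hp hpf => ?_, hf0⟩
  exact dvd_X_of_sq_dvd_one_add_X_pow_sub_pow hdK hr hc hV hp (hf ▸ hpf.mul_left _)

lemma rootMultiplicity_map_X_pow_mul_le_one [PerfectField K] {L : Type*} [Field L]
    (i : K →+* L) {f : K[X]} (hf : Squarefree f) (n : ℕ) {α : L} (hα : α ≠ 0) :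
    ((X ^ n * f).map i).rootMultiplicity α ≤ 1 := by
  have hsep : (f.map i).Separable := (PerfectField.separable_iff_squarefree.2 hf).map
  have hX : (X ^ n : L[X]).rootMultiplicity α = 0 :=
    rootMultiplicity_eq_zero (by simp [hα])
  rw [Polynomial.map_mul, Polynomial.map_pow, map_X,
    rootMultiplicity_mul (mul_ne_zero (pow_ne_zero n X_ne_zero) hsep.ne_zero), hX, zero_add]
  exact rootMultiplicity_le_one_of_separable hsep α

end Fields

theorem stmt7_general (d E m : ℕ) (hd : 0 < d) (hE : 0 < E) (hmd : d * (E - 1) < m) :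
    ((1 + X) ^ m - (truncBinom ((m : ℚ) / d) E) ^ d).natDegree = m ∧
    ((1 + X) ^ m - (truncBinom ((m : ℚ) / d) E) ^ d).rootMultiplicity 0 = E ∧
    (∀ α : AlgebraicClosure ℚ, α ≠ 0 →
      (((1 + X) ^ m - (truncBinom ((m : ℚ) / d) E) ^ d).map
        (algebraMap ℚ (AlgebraicClosure ℚ))).rootMultiplicity α ≤ 1) ∧
    ∃ f : ℚ[X],
      (1 + X) ^ m - (truncBinom ((m : ℚ) / d) E) ^ d = X ^ E * f ∧
      Squarefree f ∧ f.natDegree = m - E ∧ f.coeff 0 ≠ 0 := by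
  have hdeg := natDegree_one_add_X_pow_sub_pow
    ((Nat.mul_le_mul_left d (natDegree_truncBinom_le ((m : ℚ) / d) E)).trans_lt hmd)
  have hd0 : (d : ℚ) ≠ 0 := Nat.cast_ne_zero.2 hd.ne'
  have hr : ∀ i < E, (m : ℚ) / d ≠ i := fun i hi => by
    have hlt : d * i < m := (Nat.mul_le_mul_left d (Nat.le_sub_one_of_lt hi)).trans_lt hmd
    rw [ne_eq, div_eq_iff hd0, mul_comm]
    exact_mod_cast hlt.ne'
  obtain ⟨f, hf, hsq, hf0⟩ := exists_squarefree_one_add_X_pow_sub_pow_eq_X_pow_mul hd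
    (mul_div_cancel₀ (m : ℚ) hd0)
    (mul_ne_zero (Nat.cast_ne_zero.2 hE.ne') (genBinom_ne_zero hr))
    (one_add_X_mul_derivative_truncBinom _ E) (coeff_zero_truncBinom _ hE)
  rw [Nat.sub_add_cancel hE] at hf
  have hdegf : f.natDegree = m - E := by
    rw [← hdeg, hf, natDegree_X_pow_mul _ hsq.ne_zero, Nat.add_sub_cancel]
  refine ⟨hdeg, ?_, fun α hα => ?_, f, hf, hsq, hdegf, hf0⟩
  · rw [hf, rootMultiplicity_zero_X_pow_mul hf0]
  · rw [hf]
    exact rootMultiplicity_map_X_pow_mul_le_one _ hsq E hα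

/-- Let `d ≥ 2`, `E ≥ 2`, `m > 0` with `gcd(m,d) = 1` and `m > d(E-1)`.
Set `r = m/d` and `F = (1+x)^m - V_{r,E}(x)^d`. Then `F` has degree `m`, the multiplicity of
`0` as a root of `F` is exactly `E`, `F` has no repeated roots other than `0` (in an algebraic
closure of `ℚ`); equivalently, `f := F / x^E` is squarefree of degree `m - E` with nonzero
constant term. -/
theorem stmt7 (d E m : ℕ) (hd : 2 ≤ d) (hE : 2 ≤ E) (hm : 0 < m)
    (hcop : Nat.Coprime m d) (hmd : d * (E - 1) < m) :
    ((1 + Polynomial.X) ^ m - (truncBinom ((m : ℚ) / d) E) ^ d).natDegree = m ∧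
    ((1 + Polynomial.X) ^ m - (truncBinom ((m : ℚ) / d) E) ^ d).rootMultiplicity 0 = E ∧
    (∀ α : AlgebraicClosure ℚ, α ≠ 0 →
      (((1 + Polynomial.X) ^ m - (truncBinom ((m : ℚ) / d) E) ^ d).map
        (algebraMap ℚ (AlgebraicClosure ℚ))).rootMultiplicity α ≤ 1) ∧
    ∃ f : Polynomial ℚ,
      (1 + Polynomial.X) ^ m - (truncBinom ((m : ℚ) / d) E) ^ d = Polynomial.X ^ E * f ∧
      Squarefree f ∧ f.natDegree = m - E ∧ f.coeff 0 ≠ 0 := by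
  exact stmt7_general d E m (by omega) (by omega) hmd
end

section
/- Let d ≥ 2 and E ≥ 2 be integers and m a positive integer not divisible by d. Set r = m/d ∈ ℚ. Then x^E divides the polynomial (1+x)^m − V_{r,E}(x)^d in ℚ[x], but x^{E+1} does not divide it. -/
open Polynomial Finset

/-!
Let `B = (1 + x)^r` be the binomial power series, so that `B^d = (1 + x)^m`, and let `V` be its
truncation below degree `E`. In `B^d - V^d = (∑ B^i V^(d-1-i)) (B - V)` the first factor has
constant coefficient `d`, hence is a unit of `ℚ⟦x⟧`. So `B^d - V^d` and `B - V` are divisible by the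
same powers of `x`, and the lowest term of `B - V` is `C(r, E) x^E` unless `C(r, E)` vanishes,
which happens only when `r` is one of `0, …, E - 1`.
-/

open scoped PowerSeries

section Truncation

variable {R : Type*} [CommRing R]

theorem isUnit_geom_sum₂_of_constantCoeff_eq {f g : R⟦X⟧} {d : ℕ}
    (hfg : PowerSeries.constantCoeff f = PowerSeries.constantCoeff g)
    (hf : IsUnit (PowerSeries.constantCoeff f)) (hd : IsUnit (d : R)) :
    IsUnit (∑ i ∈ range d, f ^ i * g ^ (d - 1 - i)) := by
  rw [PowerSeries.isUnit_iff_constantCoeff, RingHom.map_geom_sum₂, ← hfg, geom_sum₂_self]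
  exact hd.mul (hf.pow _)

theorem dvd_pow_sub_pow_iff_dvd_sub {f g : R⟦X⟧} {d : ℕ}
    (hfg : PowerSeries.constantCoeff f = PowerSeries.constantCoeff g)
    (hf : IsUnit (PowerSeries.constantCoeff f)) (hd : IsUnit (d : R)) (p : R⟦X⟧) :
    p ∣ f ^ d - g ^ d ↔ p ∣ f - g := by
  rw [← (Commute.all f g).geom_sum₂_mul]
  exact (isUnit_geom_sum₂_of_constantCoeff_eq hfg hf hd).dvd_mul_left

theorem X_pow_dvd_sub_trunc (f : R⟦X⟧) (n : ℕ) :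
    PowerSeries.X ^ n ∣ f - (PowerSeries.trunc n f : R⟦X⟧) :=
  ⟨_, sub_eq_of_eq_add (PowerSeries.eq_X_pow_mul_shift_add_trunc n f)⟩

theorem X_pow_succ_dvd_sub_trunc_iff (f : R⟦X⟧) (n : ℕ) :
    PowerSeries.X ^ (n + 1) ∣ f - (PowerSeries.trunc n f : R⟦X⟧) ↔ PowerSeries.coeff n f = 0 := by
  have coeff_self :
      PowerSeries.coeff n (f - (PowerSeries.trunc n f : R⟦X⟧)) = PowerSeries.coeff n f := by
    simp [PowerSeries.coeff_trunc]
  rw [PowerSeries.X_pow_dvd_iff, Nat.forall_lt_succ_right, ← PowerSeries.X_pow_dvd_iff, coeff_self]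
  exact and_iff_right (X_pow_dvd_sub_trunc f n)

theorem constantCoeff_trunc (f : R⟦X⟧) {n : ℕ} (hn : n ≠ 0) :
    PowerSeries.constantCoeff (PowerSeries.trunc n f : R⟦X⟧) =
      PowerSeries.constantCoeff f := by
  rw [← PowerSeries.coeff_zero_eq_constantCoeff_apply,
    PowerSeries.coeff_coe_trunc_of_lt (Nat.pos_of_ne_zero hn),
    PowerSeries.coeff_zero_eq_constantCoeff_apply]

theorem X_pow_dvd_coe_iff (p : R[X]) (n : ℕ) :
    PowerSeries.X ^ n ∣ (p : R⟦X⟧) ↔ X ^ n ∣ p := by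
  simp only [PowerSeries.X_pow_dvd_iff, Polynomial.X_pow_dvd_iff, Polynomial.coeff_coe]

end Truncation

theorem binomialSeries_nsmul {R : Type*} [CommRing R] [BinomialRing R]
    (A : Type*) [Ring A] [Algebra R A] (d : ℕ) (r : R) :
    PowerSeries.binomialSeries A (d • r) = PowerSeries.binomialSeries A r ^ d := by
  induction d with
  | zero => rw [zero_smul, PowerSeries.binomialSeries_zero, pow_zero]
  | succ d ih => rw [succ_nsmul, PowerSeries.binomialSeries_add, ih, pow_succ]

theorem binomialSeries_div_pow (A : Type*) [Ring A] [Algebra ℚ A] {d : ℕ} (hd : d ≠ 0) (m : ℕ) :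
    PowerSeries.binomialSeries A ((m : ℚ) / d) ^ d = (1 + PowerSeries.X) ^ m := by
  rw [← binomialSeries_nsmul, nsmul_eq_mul, mul_div_cancel₀ _ (Nat.cast_ne_zero.mpr hd),
    PowerSeries.binomialSeries_nat]

theorem descPochhammer_smeval_eq_prod_range {R : Type*} [CommRing R] (r : R) (n : ℕ) :
    (descPochhammer ℤ n).smeval r = ∏ i ∈ range n, (r - i) := by
  rw [← Polynomial.aeval_eq_smeval, ← Polynomial.eval_map_algebraMap, descPochhammer_map,
    descPochhammer_eval_eq_prod_range]

theorem genBinom_eq_choose (r : ℚ) (k : ℕ) : genBinom r k = Ring.choose r k := by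
  rw [Ring.choose_eq_smul, descPochhammer_smeval_eq_prod_range, genBinom, smul_eq_mul,
    div_eq_inv_mul]

theorem coeff_binomialSeries_eq_genBinom (r : ℚ) (k : ℕ) :
    PowerSeries.coeff k (PowerSeries.binomialSeries ℚ r) = genBinom r k := by
  rw [PowerSeries.binomialSeries_coeff, smul_eq_mul, mul_one, genBinom_eq_choose]

theorem truncBinom_eq_trunc_binomialSeries (r : ℚ) (E : ℕ) :
    truncBinom r E = PowerSeries.trunc E (PowerSeries.binomialSeries ℚ r) := by
  simp only [truncBinom, PowerSeries.trunc_apply, ← range_eq_Ico,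
    coeff_binomialSeries_eq_genBinom, C_mul_X_pow_eq_monomial]

theorem genBinom_eq_zero_iff {r : ℚ} {k : ℕ} : genBinom r k = 0 ↔ ∃ i < k, r = i := by
  simp only [genBinom, div_eq_zero_iff, Nat.cast_eq_zero, Nat.factorial_ne_zero, or_false,
    prod_eq_zero_iff, mem_range, sub_eq_zero]

theorem genBinom_div_eq_zero_iff {d : ℕ} (hd : d ≠ 0) {m k : ℕ} :
    genBinom ((m : ℚ) / d) k = 0 ↔ ∃ i < k, m = d * i := by
  have div_eq_iff_eq_mul (i : ℕ) : (m : ℚ) / d = i ↔ m = d * i := by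
    rw [div_eq_iff (Nat.cast_ne_zero.mpr hd), mul_comm]
    norm_cast
  simp only [genBinom_eq_zero_iff, div_eq_iff_eq_mul]

theorem X_pow_dvd_one_add_X_pow_sub_truncBinom_pow_iff {d E : ℕ} (hd : d ≠ 0) (hE : E ≠ 0)
    (m n : ℕ) :
    X ^ n ∣ (1 + X) ^ m - truncBinom ((m : ℚ) / d) E ^ d ↔
      PowerSeries.X ^ n ∣ PowerSeries.binomialSeries ℚ ((m : ℚ) / d) -
        (PowerSeries.trunc E (PowerSeries.binomialSeries ℚ ((m : ℚ) / d)) : ℚ⟦X⟧) := by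
  set B := PowerSeries.binomialSeries ℚ ((m : ℚ) / d)
  have coe_eq : (((1 + X) ^ m - truncBinom ((m : ℚ) / d) E ^ d : ℚ[X]) : ℚ⟦X⟧) =
      B ^ d - (PowerSeries.trunc E B : ℚ⟦X⟧) ^ d := by
    rw [binomialSeries_div_pow ℚ hd, truncBinom_eq_trunc_binomialSeries]
    push_cast
    rfl
  have isUnit_B : IsUnit (PowerSeries.constantCoeff B) := by
    rw [PowerSeries.binomialSeries_constantCoeff]
    exact isUnit_one
  rw [← X_pow_dvd_coe_iff, coe_eq]
  exact dvd_pow_sub_pow_iff_dvd_sub (constantCoeff_trunc B hE).symm isUnit_B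
    (Nat.cast_ne_zero.mpr hd).isUnit _

theorem stmt8_general (d E m : ℕ) (hd : d ≠ 0) (hE : E ≠ 0) :
    X ^ E ∣ (1 + X) ^ m - truncBinom ((m : ℚ) / d) E ^ d ∧
      (X ^ (E + 1) ∣ (1 + X) ^ m - truncBinom ((m : ℚ) / d) E ^ d ↔ ∃ i < E, m = d * i) := by
  simp only [X_pow_dvd_one_add_X_pow_sub_truncBinom_pow_iff hd hE]
  refine ⟨X_pow_dvd_sub_trunc _ E, ?_⟩
  rw [X_pow_succ_dvd_sub_trunc_iff, coeff_binomialSeries_eq_genBinom, genBinom_div_eq_zero_iff hd]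

/-- Let `d ≥ 2`, `E ≥ 2`, and `m > 0` not divisible by `d`; set `r = m/d`.
Then `x^E` divides `(1+x)^m - V_{r,E}(x)^d` in `ℚ[x]`, but `x^{E+1}` does not. -/
theorem stmt8 (d E m : ℕ) (hd : 2 ≤ d) (hE : 2 ≤ E) (hm : 0 < m) (hdvd : ¬ d ∣ m) :
    (Polynomial.X ^ E ∣ (1 + Polynomial.X) ^ m - (truncBinom ((m : ℚ) / d) E) ^ d) ∧
    ¬ (Polynomial.X ^ (E + 1) ∣ (1 + Polynomial.X) ^ m - (truncBinom ((m : ℚ) / d) E) ^ d) := by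
  obtain ⟨hdiv, hsucc⟩ := stmt8_general d E m (by lia) (by lia)
  exact ⟨hdiv, fun h ↦ let ⟨i, _, hi⟩ := hsucc.mp h; hdvd ⟨i, hi⟩⟩
end

section
/- Let K be an algebraically closed field of characteristic 0, d ≥ 2 an integer, and m a positive integer not divisible by d. Let W ∈ K[z] be a polynomial such that z^d divides (1+z)^m − W(z)^d in K[z]. Then the coefficient of z^k in W is nonzero for every k with 0 ≤ k ≤ d−1; in particular, deg W ≥ d−1. -/
open Polynomial

/-!
Set `P = 1 + X`. If `W ^ d` agrees with `P ^ m` modulo `X ^ d`, comparing logarithmic derivatives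
gives `d P W' ≡ m P' W` modulo `X ^ (d - 1)`. For the coefficients `w_k` of `W` this reads
`d (k + 1) w_{k+1} = (m - d k) w_k` for `k + 1 < d`. Since `w_0 ≠ 0` and `m ≠ d k`, none of
`w_0, ..., w_{d-1}` vanishes.
-/

section LogarithmicDerivative

variable {R : Type*} [CommRing R]

theorem pow_sub_one_dvd_pow_sub_one_mul_of_pow_dvd_pow_sub_pow {q P W : R[X]} {n m d : ℕ}
    (hd : d ≠ 0) (h : q ^ n ∣ P ^ m - W ^ d) :
    q ^ (n - 1) ∣ W ^ (d - 1) * (d * (P * derivative W) - m * (derivative P * W)) := by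
  have hderiv : q ^ (n - 1) ∣ derivative (P ^ m - W ^ d) :=
    pow_sub_one_dvd_derivative_of_pow_dvd h
  have hself : q ^ (n - 1) ∣ P ^ m - W ^ d := (pow_dvd_pow q (n.sub_le 1)).trans h
  have hP : (m : R[X]) * (P ^ (m - 1) * P) = m * P ^ m := by
    rcases eq_or_ne m 0 with rfl | hm
    · simp only [Nat.cast_zero, zero_mul]
    · rw [pow_sub_one_mul hm]
  have hW : W ^ (d - 1) * W = W ^ d := pow_sub_one_mul hd W
  have key : W ^ (d - 1) * (d * (P * derivative W) - m * (derivative P * W)) =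
      m * derivative P * (P ^ m - W ^ d) - P * derivative (P ^ m - W ^ d) := by
    simp only [derivative_sub, derivative_pow, map_natCast]
    linear_combination derivative P * hP - m * derivative P * hW
  rw [key]
  exact dvd_sub (hself.mul_left _) (hderiv.mul_left _)

theorem not_dvd_of_dvd_pow_sub_pow {q P W : R} {m d : ℕ} (hq : Prime q) (hd : d ≠ 0)
    (hP : ¬ q ∣ P) (h : q ∣ P ^ m - W ^ d) : ¬ q ∣ W := fun hW ↦
  hP <| hq.dvd_of_dvd_pow <| (dvd_sub_left (dvd_pow hW hd)).1 h

theorem pow_sub_one_dvd_of_pow_dvd_pow_sub_pow [IsCancelMulZero R] {q P W : R[X]} {n m d : ℕ}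
    (hq : Prime q) (hn : n ≠ 0) (hd : d ≠ 0) (hP : ¬ q ∣ P) (h : q ^ n ∣ P ^ m - W ^ d) :
    q ^ (n - 1) ∣ d * (P * derivative W) - m * (derivative P * W) := by
  have hW : ¬ q ∣ W := not_dvd_of_dvd_pow_sub_pow hq hd hP ((dvd_pow_self q hn).trans h)
  exact hq.pow_dvd_of_dvd_mul_left _ (mt hq.dvd_of_dvd_pow hW)
    (pow_sub_one_dvd_pow_sub_one_mul_of_pow_dvd_pow_sub_pow hd h)

end LogarithmicDerivative

section Recurrence

theorem coeff_one_add_X_mul_derivative_s12 {R : Type*} [Semiring R] (W : R[X]) (k : ℕ) :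
    ((1 + X) * derivative W).coeff k = W.coeff (k + 1) * (k + 1) + W.coeff k * k := by
  rw [add_mul, one_mul, coeff_add, coeff_derivative]
  cases k with
  | zero => simp only [coeff_X_mul_zero, Nat.cast_zero, mul_zero]
  | succ j => rw [coeff_X_mul, coeff_derivative, Nat.cast_succ j]

theorem coeff_ne_zero_of_X_pow_dvd_one_add_X_mul_derivative {R : Type*} [CommRing R]
    [NoZeroDivisors R] {a b : R} {n : ℕ} {W : R[X]} (hab : ∀ k < n, b ≠ a * k)
    (hW₀ : W.coeff 0 ≠ 0) (h : X ^ n ∣ C a * ((1 + X) * derivative W) - C b * W) :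
    ∀ k ≤ n, W.coeff k ≠ 0 := by
  intro k
  induction k with
  | zero => exact fun _ ↦ hW₀
  | succ k ih =>
    intro hk hzero
    have hcoeff : a * (W.coeff (k + 1) * (k + 1) + W.coeff k * k) - b * W.coeff k = 0 := by
      simpa only [coeff_sub, coeff_C_mul, coeff_one_add_X_mul_derivative_s12]
        using X_pow_dvd_iff.1 h k hk
    have hprod : (b - a * k) * W.coeff k = 0 := by
      linear_combination a * (k + 1) * hzero - hcoeff
    exact mul_ne_zero (sub_ne_zero.2 (hab k hk)) (ih (Nat.le_of_succ_le hk)) hprod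

end Recurrence

theorem stmt12_general {R : Type*} [CommRing R] [IsDomain R] {d m : ℕ} {W : R[X]}
    (hdm : ∀ k < d - 1, (m : R) ≠ d * k) (hW : X ^ d ∣ (1 + X) ^ m - W ^ d) :
    (∀ k < d, W.coeff k ≠ 0) ∧ d ≤ W.natDegree + 1 := by
  have hcoeff : ∀ k < d, W.coeff k ≠ 0 := by
    intro k hk
    have hd : d ≠ 0 := Nat.ne_zero_of_lt hk
    have hX : ¬ (X : R[X]) ∣ 1 + X := by simp [X_dvd_iff]
    have hW₀ : W.coeff 0 ≠ 0 := mt X_dvd_iff.2 <|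
      not_dvd_of_dvd_pow_sub_pow prime_X hd hX ((dvd_pow_self X hd).trans hW)
    have hode : X ^ (d - 1) ∣ C (d : R) * ((1 + X) * derivative W) - C (m : R) * W := by
      simpa using pow_sub_one_dvd_of_pow_dvd_pow_sub_pow prime_X hd hd hX hW
    exact coeff_ne_zero_of_X_pow_dvd_one_add_X_mul_derivative hdm hW₀ hode k
      (Nat.le_sub_one_of_lt hk)
  refine ⟨hcoeff, ?_⟩
  by_contra! hdeg
  exact hcoeff _ hdeg (coeff_eq_zero_of_natDegree_lt (Nat.lt_succ_self _))

/-- Let `K` be an algebraically closed field of characteristic `0`,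
`d ≥ 2`, and `m > 0` not divisible by `d`. Let `W ∈ K[z]` with `z^d ∣ (1+z)^m - W(z)^d`.
Then the coefficient of `z^k` in `W` is nonzero for all `0 ≤ k ≤ d-1`; in particular
`deg W ≥ d - 1`. -/
theorem stmt12 {K : Type*} [Field K] [IsAlgClosed K] [CharZero K]
    (d m : ℕ) (hd : 2 ≤ d) (hm : 0 < m) (hdvd : ¬ d ∣ m) (W : Polynomial K)
    (hW : Polynomial.X ^ d ∣ (1 + Polynomial.X) ^ m - W ^ d) :
    (∀ k : ℕ, k ≤ d - 1 → W.coeff k ≠ 0) ∧ d - 1 ≤ W.natDegree := by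
  have hdm : ∀ k < d - 1, (m : K) ≠ d * k := fun k _ h ↦ hdvd ⟨k, by exact_mod_cast h⟩
  exact (stmt12_general hdm hW).imp (fun h k hk ↦ h k (by omega)) Nat.sub_le_of_le_add
end

section
/- Let K be an algebraically closed field of characteristic 0, and let d, n be integers with 2 ≤ d < n and gcd(n,d) = 1. Let f ∈ K[x] be a monic polynomial of degree n, let a, a₁ ∈ K with a₁ ≠ a, and let v ∈ K[x] be a polynomial such that (x−a₁)^d·f(x) + v(x)^d = (x−a)^{n+d}. Then v(a₁) ≠ 0, d−1 ≤ deg v < (n+d)/d, and consequently n > d² − 2d. -/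
open Polynomial

/-!
Put `q = X - a` and `m = n + d`. The Wronskian of `q ^ m` and `v ^ d` is the polynomial
`g = d q v' - m v q'` times a power of `q` and a power of `v`. Modulo `(X - a₁) ^ d` the two
powers coincide, so their Wronskian is divisible by `(X - a₁) ^ (d - 1)`; since `a₁` is a root
of neither `q` nor `v`, already `g` is divisible by it. The degree of `g` is at most `deg v`,
and `g` is nonzero because its coefficient there is `(d deg v - m) lc(v)` and `d` does not
divide `n`. Hence `d - 1 ≤ deg v`. The upper bound on `deg v` is a comparison of degrees, strict
again because `d` does not divide `n`.
-/

section MulDerivative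

variable {R : Type*}

lemma mul_derivative_pow [CommSemiring R] (p : R[X]) (n : ℕ) :
    p * derivative (p ^ n) = n * p ^ n * derivative p := by
  cases n with
  | zero => simp
  | succ n =>
    rw [derivative_pow_succ, map_add, map_one, map_natCast, Nat.cast_succ]
    ring

lemma natDegree_mul_derivative_le [Semiring R] (p q : R[X]) :
    (p * derivative q).natDegree ≤ p.natDegree + q.natDegree - 1 := by
  by_cases hq : q.natDegree = 0
  · simp [derivative_of_natDegree_zero hq]
  · have := natDegree_mul_le_of_le (le_refl p.natDegree) (natDegree_derivative_le q)
    omega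

lemma coeff_mul_derivative_natDegree_add_natDegree_sub_one [Semiring R] (p q : R[X]) :
    (p * derivative q).coeff (p.natDegree + q.natDegree - 1)
      = p.leadingCoeff * (q.leadingCoeff * q.natDegree) := by
  rcases hq : q.natDegree with _ | k
  · simp [derivative_of_natDegree_zero hq]
  · have hderiv : (derivative q).natDegree ≤ k := by
      simpa only [hq, Nat.add_sub_cancel] using natDegree_derivative_le q
    rw [← add_assoc, Nat.add_sub_cancel, coeff_mul_add_eq_of_natDegree_le le_rfl hderiv,
      coeff_derivative, leadingCoeff, leadingCoeff, hq, Nat.cast_succ]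

end MulDerivative

section WeightedWronskian

variable {R : Type*} [CommRing R]

/-- The Wronskian of `p` and `q` with weights `m` and `n`. It is the factor of the Wronskian of
`p ^ m` and `q ^ n` that remains after removing the powers of `p` and `q`, in other words the
numerator of the logarithmic derivative of `q ^ n / p ^ m`. -/
noncomputable def weightedWronskian (m n : ℕ) (p q : R[X]) : R[X] :=
  n * (p * derivative q) - m * (q * derivative p)

-- Multiplying by `p * q` avoids the exponents `m - 1` and `n - 1`, which truncate at `0`.
lemma mul_wronskian_pow_pow (m n : ℕ) (p q : R[X]) :
    p * q * wronskian (p ^ m) (q ^ n) = p ^ m * q ^ n * weightedWronskian m n p q := by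
  rw [wronskian, weightedWronskian]
  linear_combination p * p ^ m * mul_derivative_pow q n - q * q ^ n * mul_derivative_pow p m

lemma natDegree_weightedWronskian_le (m n : ℕ) (p q : R[X]) :
    (weightedWronskian m n p q).natDegree ≤ p.natDegree + q.natDegree - 1 := by
  have hle (c : ℕ) (r s : R[X]) :
      ((c : R[X]) * (r * derivative s)).natDegree ≤ r.natDegree + s.natDegree - 1 := by
    rw [← map_natCast C]
    exact (natDegree_C_mul_le _ _).trans (natDegree_mul_derivative_le r s)
  exact (natDegree_sub_le_of_le (hle n p q) (hle m q p)).trans_eq (by rw [add_comm, max_self])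

lemma coeff_weightedWronskian_natDegree_add_natDegree_sub_one (m n : ℕ) (p q : R[X]) :
    (weightedWronskian m n p q).coeff (p.natDegree + q.natDegree - 1)
      = (n * q.natDegree - m * p.natDegree) * (p.leadingCoeff * q.leadingCoeff) := by
  have hcoeff_swap : (q * derivative p).coeff (p.natDegree + q.natDegree - 1)
      = q.leadingCoeff * (p.leadingCoeff * p.natDegree) := by
    rw [add_comm p.natDegree, coeff_mul_derivative_natDegree_add_natDegree_sub_one]
  rw [weightedWronskian, coeff_sub, coeff_natCast_mul, coeff_natCast_mul, hcoeff_swap,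
    coeff_mul_derivative_natDegree_add_natDegree_sub_one]
  ring

lemma weightedWronskian_ne_zero [NoZeroDivisors R] {m n : ℕ} {p q : R[X]} (hp : p ≠ 0) (hq : q ≠ 0)
    (hne : (n * q.natDegree : R) ≠ m * p.natDegree) : weightedWronskian m n p q ≠ 0 := by
  intro h
  have hcoeff := coeff_weightedWronskian_natDegree_add_natDegree_sub_one m n p q
  rw [h, coeff_zero] at hcoeff
  exact mul_ne_zero (sub_ne_zero.2 hne)
    (mul_ne_zero (leadingCoeff_ne_zero.2 hp) (leadingCoeff_ne_zero.2 hq)) hcoeff.symm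

end WeightedWronskian

section PowDvdSub

variable {R : Type*} [CommRing R]

lemma pow_sub_one_dvd_wronskian_of_pow_dvd_sub {p r s : R[X]} {d : ℕ} (h : p ^ d ∣ r - s) :
    p ^ (d - 1) ∣ wronskian r s := by
  have hwronskian : wronskian r s = (r - s) * derivative s - derivative (r - s) * s := by
    rw [wronskian, derivative_sub]
    ring
  rw [hwronskian]
  exact dvd_sub (((pow_dvd_pow p d.pred_le).trans h).mul_right _)
    ((pow_sub_one_dvd_derivative_of_pow_dvd h).mul_right _)

lemma pow_sub_one_dvd_weightedWronskian [NoZeroDivisors R] {p q v : R[X]} {d m k : ℕ}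
    (hp : Prime p) (hq : ¬ p ∣ q) (hv : ¬ p ∣ v) (hdvd : p ^ d ∣ q ^ m - v ^ k) :
    p ^ (d - 1) ∣ weightedWronskian m k q v := by
  have hmul : p ^ (d - 1) ∣ q ^ m * v ^ k * weightedWronskian m k q v := by
    rw [← mul_wronskian_pow_pow]
    exact (pow_sub_one_dvd_wronskian_of_pow_dvd_sub hdvd).mul_left _
  have hpow : ¬ p ∣ q ^ m * v ^ k :=
    hp.not_dvd_mul (hq ∘ hp.dvd_of_dvd_pow) (hv ∘ hp.dvd_of_dvd_pow)
  exact hp.pow_dvd_of_dvd_mul_left _ hpow hmul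

theorem sub_one_mul_natDegree_le_of_pow_dvd_pow_sub_pow [NoZeroDivisors R] {p q v : R[X]}
    {d m k : ℕ} (hp : Prime p) (hq : ¬ p ∣ q) (hv : ¬ p ∣ v) (hdvd : p ^ d ∣ q ^ m - v ^ k)
    (hne : (k * v.natDegree : R) ≠ m * q.natDegree) :
    (d - 1) * p.natDegree ≤ q.natDegree + v.natDegree - 1 := by
  have hq₀ : q ≠ 0 := fun h ↦ hq (h ▸ dvd_zero p)
  have hv₀ : v ≠ 0 := fun h ↦ hv (h ▸ dvd_zero p)
  calc (d - 1) * p.natDegree = (p ^ (d - 1)).natDegree := (natDegree_pow _ _).symm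
    _ ≤ (weightedWronskian m k q v).natDegree :=
      natDegree_le_of_dvd (pow_sub_one_dvd_weightedWronskian hp hq hv hdvd)
        (weightedWronskian_ne_zero hq₀ hv₀ hne)
    _ ≤ q.natDegree + v.natDegree - 1 := natDegree_weightedWronskian_le m k q v

end PowDvdSub

section LinearPowers

variable {R : Type*} [CommRing R] [IsDomain R] {d n : ℕ} {f v : R[X]} {a a₁ : R}

lemma eval_ne_zero_of_X_sub_C_pow_mul_add_pow_eq {m : ℕ} (hd : d ≠ 0) (hne : a₁ ≠ a)
    (heq : (X - C a₁) ^ d * f + v ^ d = (X - C a) ^ m) : v.eval a₁ ≠ 0 := by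
  intro hv
  have heval : 0 = (a₁ - a) ^ m := by simpa [hd, hv] using congrArg (eval a₁) heq
  exact pow_ne_zero m (sub_ne_zero.2 hne) heval.symm

lemma mul_natDegree_le_of_X_sub_C_pow_mul_add_pow_eq (hf : f.natDegree ≤ n)
    (heq : (X - C a₁) ^ d * f + v ^ d = (X - C a) ^ (n + d)) : d * v.natDegree ≤ n + d := by
  have hpow (b : R) (k : ℕ) : ((X - C b) ^ k).natDegree = k := by
    rw [natDegree_pow, natDegree_X_sub_C, mul_one]
  have hmul : ((X - C a₁) ^ d * f).natDegree ≤ n + d :=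
    (natDegree_mul_le_of_le (hpow a₁ d).le hf).trans_eq (add_comm d n)
  calc d * v.natDegree = (v ^ d).natDegree := (natDegree_pow v d).symm
    _ = ((X - C a) ^ (n + d) - (X - C a₁) ^ d * f).natDegree := by rw [← heq, add_sub_cancel_left]
    _ ≤ n + d := (natDegree_sub_le_of_le (hpow a _).le hmul).trans_eq (max_self _)

lemma sub_one_le_natDegree_of_X_sub_C_pow_mul_add_pow_eq {m : ℕ} [CharZero R] (hne : a₁ ≠ a)
    (hv : v.eval a₁ ≠ 0) (hdeg : d * v.natDegree ≠ m)
    (heq : (X - C a₁) ^ d * f + v ^ d = (X - C a) ^ m) : d - 1 ≤ v.natDegree := by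
  have hq : ¬ X - C a₁ ∣ X - C a := by
    simpa [dvd_iff_isRoot, sub_eq_zero] using hne
  have hv' : ¬ X - C a₁ ∣ v := by rwa [dvd_iff_isRoot]
  have hdvd : (X - C a₁) ^ d ∣ (X - C a) ^ m - v ^ d := ⟨f, by rw [← heq, add_sub_cancel_right]⟩
  have hcast : (d * v.natDegree : R) ≠ m * (X - C a).natDegree := by
    rw [natDegree_X_sub_C, Nat.cast_one, mul_one]
    exact_mod_cast hdeg
  simpa only [natDegree_X_sub_C, mul_one, Nat.add_sub_cancel_left] using
    sub_one_mul_natDegree_le_of_pow_dvd_pow_sub_pow (prime_X_sub_C a₁) hq hv' hdvd hcast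

end LinearPowers

theorem stmt13_general {R : Type*} [CommRing R] [IsDomain R] [CharZero R]
    {d n : ℕ} (hd : d ≠ 0) (hdn : ¬ d ∣ n) {f v : R[X]} (hf : f.natDegree ≤ n)
    {a a₁ : R} (hne : a₁ ≠ a) (heq : (X - C a₁) ^ d * f + v ^ d = (X - C a) ^ (n + d)) :
    v.eval a₁ ≠ 0 ∧ d - 1 ≤ v.natDegree ∧ (v.natDegree : ℚ) < ((n : ℚ) + d) / d ∧
      d ^ 2 - 2 * d < n := by
  have hv : v.eval a₁ ≠ 0 := eval_ne_zero_of_X_sub_C_pow_mul_add_pow_eq hd hne heq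
  have hdeg_ne : d * v.natDegree ≠ n + d := fun h ↦
    hdn ((Nat.dvd_add_left dvd_rfl).1 (Dvd.intro _ h))
  have hlower : d - 1 ≤ v.natDegree :=
    sub_one_le_natDegree_of_X_sub_C_pow_mul_add_pow_eq hne hv hdeg_ne heq
  have hupper : d * v.natDegree < n + d :=
    (mul_natDegree_le_of_X_sub_C_pow_mul_add_pow_eq hf heq).lt_of_ne hdeg_ne
  refine ⟨hv, hlower, ?_, ?_⟩
  · rw [lt_div_iff₀' (by positivity)]
    exact_mod_cast hupper
  · have hd_sq : d * (d - 1) < n + d := (Nat.mul_le_mul_left d hlower).trans_lt hupper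
    have hn : n ≠ 0 := fun h ↦ hdn (h ▸ dvd_zero d)
    rw [Nat.mul_sub_one, ← sq] at hd_sq
    omega

/-- Let `K` be an algebraically closed field of characteristic `0`, and
`2 ≤ d < n` with `gcd(n,d) = 1`. Let `f ∈ K[x]` be monic of degree `n`, `a ≠ a₁` in `K`, and
`v ∈ K[x]` with `(x-a₁)^d f(x) + v(x)^d = (x-a)^{n+d}`. Then `v(a₁) ≠ 0`,
`d - 1 ≤ deg v < (n+d)/d`, and consequently `n > d² - 2d`. -/
theorem stmt13 {K : Type*} [Field K] [IsAlgClosed K] [CharZero K]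
    (d n : ℕ) (hd : 2 ≤ d) (hdn : d < n) (hcop : Nat.Coprime n d)
    (f : Polynomial K) (hmonic : f.Monic) (hfdeg : f.natDegree = n)
    (a a₁ : K) (hne : a₁ ≠ a) (v : Polynomial K)
    (heq : (Polynomial.X - Polynomial.C a₁) ^ d * f + v ^ d
      = (Polynomial.X - Polynomial.C a) ^ (n + d)) :
    v.eval a₁ ≠ 0 ∧ d - 1 ≤ v.natDegree ∧ (v.natDegree : ℚ) < ((n : ℚ) + d) / d ∧
      d ^ 2 - 2 * d < n :=
  stmt13_general (by omega) (fun h ↦ by have := hcop.symm.eq_one_of_dvd h; omega) hfdeg.le hne heq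
end

section
/- Let K be an algebraically closed field, d ≥ 2 an integer with char(K) not dividing d, and n, m integers with d < n < m, d dividing m, and n − m + m/d ≥ 0; set ℓ = m/d and s = n − m + ℓ, so 0 ≤ s < ℓ. Let B, D ∈ K be nonzero, let C ∈ K with C ≠ 0 and C ≠ −D, and for each d-th root of unity γ ≠ 1 in K define h_{γ,C}(x) = B(1−γ)·x^ℓ − γ·D·x^s − γ·C, and define q_C(x) = D·x^s + C. Then: (i) for any two distinct d-th roots of unity γ₁ ≠ γ₂, both different from 1, the polynomials h_{γ₁,C} and h_{γ₂,C} have no common root in K; and (ii) for every d-th root of unity γ ≠ 1, the polynomials q_C and h_{γ,C} have no common root in K. -/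
open Polynomial

/-!
Writing `f = B x^ℓ` and `q = D x^s + c`, one has `h_γ = f - γ (f + q)` and `h_1 = -q`, so the `h_γ`
together with `q` are members of a pencil spanned by `f` and `f + q`. Two members of a pencil whose
parameters differ by a unit generate the same ideal as `f` and `f + q`, hence as `f` and `q`, and
`x^ℓ` is coprime to `q` as soon as `q(0) ∈ {c, D + c}` is a unit.
-/

section CommRing

variable {R : Type*} [CommRing R]

theorem isCoprime_sub_mul_of_isUnit_sub {f g a b : R} (h : IsCoprime f g) (hab : IsUnit (a - b)) :
    IsCoprime (f - a * g) (f - b * g) := by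
  have h_unit_mul : IsCoprime (f - a * g) ((a - b) * g) :=
    (isCoprime_mul_unit_left_right hab _ _).2 (IsCoprime.sub_mul_right_left_iff.2 h)
  have h_eq : f - b * g = (a - b) * g + (f - a * g) * 1 := by ring
  rw [h_eq]
  exact h_unit_mul.add_mul_left_right 1

theorem isCoprime_X_of_isUnit_coeff_zero {p : R[X]} (hp : IsUnit (p.coeff 0)) :
    IsCoprime X p := by
  have h_const : IsCoprime X (C (p.coeff 0)) :=
    (isCoprime_zero_right.2 (hp.map C)).symm.of_isCoprime_of_dvd_left (dvd_zero X)
  rw [← divX_mul_X_add p]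
  exact h_const.mul_add_right_right p.divX

theorem isUnit_coeff_zero_C_mul_X_pow_add_C {D c : R} (hc : IsUnit c) (hcD : IsUnit (c + D))
    (s : ℕ) : IsUnit ((C D * X ^ s + C c).coeff 0) := by
  cases s with
  | zero => simpa [add_comm] using hcD
  | succ s => simpa using hc

/-- The polynomial `h_{γ,c}`, with arbitrary `ℓ` and `s`. Any ring element `γ` is allowed, not only
a root of unity, so that the base polynomial `D x^s + c` is, up to sign, the member `γ = 1`. -/
noncomputable def trinomialPencil (B D c : R) (ℓ s : ℕ) (γ : R) : R[X] :=
  C (B * (1 - γ)) * X ^ ℓ - C (γ * D) * X ^ s - C (γ * c)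

theorem trinomialPencil_eq_sub_mul (B D c : R) (ℓ s : ℕ) (γ : R) :
    trinomialPencil B D c ℓ s γ =
      C B * X ^ ℓ - C γ * (C B * X ^ ℓ + (C D * X ^ s + C c)) := by
  simp only [trinomialPencil, C_mul, C_sub, C_1]
  ring

theorem trinomialPencil_one (B D c : R) (ℓ s : ℕ) :
    trinomialPencil B D c ℓ s 1 = -(C D * X ^ s + C c) := by
  rw [trinomialPencil_eq_sub_mul, C_1]
  ring

theorem isCoprime_trinomialPencil {B D c γ₁ γ₂ : R} (hB : IsUnit B) (hc : IsUnit c)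
    (hcD : IsUnit (c + D)) (hγ : IsUnit (γ₁ - γ₂)) (ℓ s : ℕ) :
    IsCoprime (trinomialPencil B D c ℓ s γ₁) (trinomialPencil B D c ℓ s γ₂) := by
  have h_X_pow : IsCoprime (X ^ ℓ) (C D * X ^ s + C c) :=
    (isCoprime_X_of_isUnit_coeff_zero (isUnit_coeff_zero_C_mul_X_pow_add_C hc hcD s)).pow_left
  have h_base : IsCoprime (C B * X ^ ℓ) (C D * X ^ s + C c) :=
    (isCoprime_mul_unit_left_left (hB.map C) _ _).2 h_X_pow
  have h_span : IsCoprime (C B * X ^ ℓ) (C B * X ^ ℓ + (C D * X ^ s + C c)) := by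
    simpa only [mul_one, add_comm] using h_base.add_mul_left_right 1
  rw [trinomialPencil_eq_sub_mul, trinomialPencil_eq_sub_mul]
  exact isCoprime_sub_mul_of_isUnit_sub h_span (by simpa only [C_sub] using hγ.map C)

theorem not_eval_eq_zero_and_of_isCoprime [Nontrivial R] {p q : R[X]} (h : IsCoprime p q)
    (α : R) : ¬ (p.eval α = 0 ∧ q.eval α = 0) := by
  simpa only [coe_aeval_eq_eval, not_and_or] using aeval_ne_zero_of_isCoprime h α

theorem stmt17_general {B D c : R} (hB : IsUnit B) (hc : IsUnit c) (hcD : IsUnit (c + D))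
    (ℓ s : ℕ) :
    (∀ γ₁ γ₂ : R, IsUnit (γ₁ - γ₂) →
      IsCoprime (trinomialPencil B D c ℓ s γ₁) (trinomialPencil B D c ℓ s γ₂)) ∧
    (∀ γ : R, IsUnit (1 - γ) →
      IsCoprime (C D * X ^ s + C c) (trinomialPencil B D c ℓ s γ)) := by
  refine ⟨fun γ₁ γ₂ hγ => isCoprime_trinomialPencil hB hc hcD hγ ℓ s, fun γ hγ => ?_⟩
  simpa only [trinomialPencil_one, IsCoprime.neg_left_iff] using
    isCoprime_trinomialPencil hB hc hcD hγ ℓ s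

end CommRing

/-- Let `K` be algebraically closed, `d ≥ 2` with `char K ∤ d`, and
`d < n < m` with `d ∣ m` and `n - m + m/d ≥ 0`; set `ℓ = m/d` and `s = n - m + ℓ`. Let
`B, D ∈ K` be nonzero and `c ∈ K` with `c ≠ 0`, `c ≠ -D`. For each `d`-th root of unity
`γ ≠ 1` put `h_γ(x) = B(1-γ) x^ℓ - γ D x^s - γ c`, and `q(x) = D x^s + c`. Then (i) for
distinct `d`-th roots of unity `γ₁ ≠ γ₂`, both `≠ 1`, the polynomials `h_{γ₁}` and `h_{γ₂}`
have no common root in `K`; and (ii) for every `d`-th root of unity `γ ≠ 1`, `q` and `h_γ`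
have no common root in `K`. -/
theorem stmt17 {K : Type*} [Field K] [IsAlgClosed K] (d : ℕ) (hd : 2 ≤ d)
    (hchar : ¬ (ringChar K ∣ d)) (n m : ℕ) (hdn : d < n) (hnm : n < m) (hdvd : d ∣ m)
    (hge : 0 ≤ (n : ℤ) - (m : ℤ) + ((m / d : ℕ) : ℤ))
    (B D c : K) (hB : B ≠ 0) (hD : D ≠ 0) (hc0 : c ≠ 0) (hcD : c ≠ -D) :
    (∀ γ₁ γ₂ : K, γ₁ ^ d = 1 → γ₂ ^ d = 1 → γ₁ ≠ 1 → γ₂ ≠ 1 → γ₁ ≠ γ₂ →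
      ∀ α : K, ¬ ((Polynomial.C (B * (1 - γ₁)) * Polynomial.X ^ (m / d)
            - Polynomial.C (γ₁ * D) * Polynomial.X ^ (n + m / d - m)
            - Polynomial.C (γ₁ * c)).eval α = 0 ∧
          (Polynomial.C (B * (1 - γ₂)) * Polynomial.X ^ (m / d)
            - Polynomial.C (γ₂ * D) * Polynomial.X ^ (n + m / d - m)
            - Polynomial.C (γ₂ * c)).eval α = 0)) ∧
    (∀ γ : K, γ ^ d = 1 → γ ≠ 1 →
      ∀ α : K, ¬ ((Polynomial.C D * Polynomial.X ^ (n + m / d - m)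
            + Polynomial.C c).eval α = 0 ∧
          (Polynomial.C (B * (1 - γ)) * Polynomial.X ^ (m / d)
            - Polynomial.C (γ * D) * Polynomial.X ^ (n + m / d - m)
            - Polynomial.C (γ * c)).eval α = 0)) := by
  obtain ⟨h_pencil, h_base⟩ := stmt17_general hB.isUnit hc0.isUnit
    (.mk0 _ (mt add_eq_zero_iff_eq_neg.1 hcD)) (m / d) (n + m / d - m)
  exact ⟨fun γ₁ γ₂ _ _ _ _ hne =>
      not_eval_eq_zero_and_of_isCoprime (h_pencil γ₁ γ₂ (sub_ne_zero.2 hne).isUnit),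
    fun γ _ hγ => not_eval_eq_zero_and_of_isCoprime (h_base γ (sub_ne_zero.2 hγ.symm).isUnit)⟩
end
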